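/- Let {X_t}_{t≥1} be identically distributed, pairwise asymptotically independent positive random variables and {Θ_t}_{t≥1} positive random variables with the sequence {Θ_t} independent of the sequence {X_t}, such that X_(∞) = Σ_{t=1}^∞ Θ_t X_t is finite almost surely and has a regularly varying tail of index −α for some α>0. Suppose {Θ_t} satisfies the RW moment conditions for α, and that Σ_{t=1}^∞ E[Θ_t^{α+iβ}] ≠ 0 for every β∈ℝ (here Θ^{α+iβ} = exp((α+iβ)·log Θ); under the RW conditions this series converges absolutely). Then X₁ has a regularly varying tail of index −α and P[X_(∞) > x] ~ P[X₁ > x] · Σ_{t=1}^∞ E[Θ_t^α] as x→∞. -/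

import Mathlib

open MeasureTheory ProbabilityTheory Filter Topology
open scoped ENNReal

noncomputable section

/-- A function, positive on `(0,∞)`, is regularly varying at infinity with index `ρ`:
for every `t > 0`, `f(tx)/f(x) → t^ρ` as `x → ∞`. -/
def RegVarying (f : ℝ → ℝ) (ρ : ℝ) : Prop :=
  (∀ x : ℝ, 0 < x → 0 < f x) ∧
    ∀ t : ℝ, 0 < t → Tendsto (fun x : ℝ => f (t * x) / f x) atTop (nhds (t ^ ρ))

variable {Ω : Type*} [MeasurableSpace Ω]

/-- The (possibly infinite) moment `E[Θ^r]`. -/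
def momE (P : Measure Ω) (Θ : Ω → ℝ) (r : ℝ) : ℝ≥0∞ :=
  ∫⁻ ω, ENNReal.ofReal (Θ ω ^ r) ∂P

/-- The RW moment conditions for the sequence `{Θ_t}` and the index `α`:
if `0 < α < 1`, then `Σ_t E[Θ_t^{α+ε} + Θ_t^{α-ε}] < ∞` for some `ε ∈ (0,α)`;
if `α ≥ 1`, then `Σ_t (E[Θ_t^{α+ε} + Θ_t^{α-ε}])^{1/(α+ε)} < ∞` for some `ε ∈ (0,α)`. -/
def RWConditions (P : Measure Ω) (Θ : ℕ → Ω → ℝ) (α : ℝ) : Prop :=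
  ∃ ε : ℝ, 0 < ε ∧ ε < α ∧
    ((α < 1 ∧ (∑' t : ℕ, (momE P (Θ t) (α + ε) + momE P (Θ t) (α - ε))) ≠ ⊤) ∨
      (1 ≤ α ∧
        (∑' t : ℕ, (momE P (Θ t) (α + ε) + momE P (Θ t) (α - ε)) ^ (1 / (α + ε))) ≠ ⊤))

/-- The tail `P[Z > x]` of a random variable, as a real number. -/
def tailP (P : Measure Ω) (Z : Ω → ℝ) (x : ℝ) : ℝ := (P {ω | x < Z ω}).toReal

/-- `X` and `Y` are asymptotically independent:
`P[X > x, Y > x] / P[X > x] → 0` and `P[X > x, Y > x] / P[Y > x] → 0` as `x → ∞`. -/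
def AsympIndep (P : Measure Ω) (X Y : Ω → ℝ) : Prop :=
  Tendsto (fun x : ℝ =>
      (P {ω | x < X ω ∧ x < Y ω}).toReal / (P {ω | x < X ω}).toReal) atTop (nhds 0) ∧
    Tendsto (fun x : ℝ =>
      (P {ω | x < X ω ∧ x < Y ω}).toReal / (P {ω | x < Y ω}).toReal) atTop (nhds 0)

open FourierTransform in
/-- If the characteristic function of `ρ` is smooth and nowhere zero, then any smooth compactly
supported `ψ` has an inverse Fourier transform of the form `y ↦ ∫ h(y + v) dρ(v)`. -/
theorem exists_schwartz_fourierInv_eq_integral {ρ : Measure ℝ} [IsFiniteMeasure ρ]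
    (hmom : ∀ k : ℕ, MemLp id (k : ℝ≥0∞) ρ) (hne : ∀ t, charFun ρ t ≠ 0)
    (ψ : ℝ → ℂ) (hψ : ContDiff ℝ (⊤ : ℕ∞) ψ) (hψc : HasCompactSupport ψ) :
    ∃ h : SchwartzMap ℝ ℂ, ∀ y, (𝓕⁻ ψ) y = ∫ v, h (y + v) ∂ρ := by
  set R : ℝ → ℂ := fun ξ => charFun ρ (2 * Real.pi * ξ) with hR
  have hRs : ContDiff ℝ (⊤ : ℕ∞) R :=
    (contDiff_charFun' (n := ⊤) hmom).comp (contDiff_const.mul contDiff_id)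
  have hcs : HasCompactSupport (fun ξ => ψ ξ * (R ξ)⁻¹) := hψc.mul_right
  have hsm : ContDiff ℝ (⊤ : ℕ∞) (fun ξ => ψ ξ * (R ξ)⁻¹) := hψ.mul (hRs.inv fun x => hne _)
  set q : SchwartzMap ℝ ℂ := hcs.toSchwartzMap hsm with hq
  have hqv : ∀ ξ, q ξ = ψ ξ * (R ξ)⁻¹ := fun ξ => rfl
  refine ⟨𝓕⁻ q, fun y => ?_⟩
  have h1 : ∀ v : ℝ, (𝓕⁻ q) (y + v)
      = ∫ w, Complex.exp (↑(2 * Real.pi * (w * (y + v))) * Complex.I) * q w := by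
    intro v
    rw [SchwartzMap.fourierInv_coe, Real.fourierInv_eq']
    refine integral_congr_ae (ae_of_all _ fun w => ?_)
    have h4 : inner ℝ w (y + v) = w * (y + v) := by simp [mul_comm]
    simp only [h4, smul_eq_mul]
  simp_rw [h1]
  rw [integral_integral_swap]
  · rw [Real.fourierInv_eq']
    refine integral_congr_ae (ae_of_all _ fun w => ?_)
    have h2 : ∀ v : ℝ, Complex.exp (↑(2 * Real.pi * (w * (y + v))) * Complex.I) * q w
        = (Complex.exp (↑(2 * Real.pi * (w * y)) * Complex.I) * q w) *
          Complex.exp (↑(2 * Real.pi * w) * v * Complex.I) := by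
      intro v
      rw [mul_right_comm (Complex.exp _), ← Complex.exp_add]
      congr 2
      push_cast
      ring
    simp_rw [h2]
    have h3 : charFun ρ (2 * Real.pi * w) ≠ 0 := hne _
    have h4 : inner ℝ w y = w * y := by simp [mul_comm]
    simp only [integral_const_mul, ← charFun_apply_real, hqv, hR, smul_eq_mul, h4]
    rw [mul_assoc (Complex.exp _), inv_mul_cancel_right₀ h3]
  · have hb : Integrable (fun z : ℝ × ℝ => (1 : ℂ) * q z.2) (ρ.prod volume) :=
      Integrable.mul_prod (integrable_const (1 : ℂ)) q.integrable
    refine hb.mono ?_ (ae_of_all _ fun z => ?_)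
    · apply Continuous.aestronglyMeasurable
      have := q.continuous
      simp only [Function.uncurry_def]
      fun_prop
    · simp only [Function.uncurry_def, norm_mul, Complex.norm_exp_ofReal_mul_I]
      simp

open FourierTransform in
/-- A bounded function whose convolution with `ρ` vanishes is annihilated by every function with
smooth compactly supported Fourier transform. -/
theorem integral_mul_fourierInv_eq_zero {ρ : Measure ℝ} [IsFiniteMeasure ρ]
    (hmom : ∀ k : ℕ, MemLp id (k : ℝ≥0∞) ρ) (hne : ∀ t, charFun ρ t ≠ 0)
    (ψ : ℝ → ℂ) (hψ : ContDiff ℝ (⊤ : ℕ∞) ψ) (hψc : HasCompactSupport ψ)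
    {K : ℝ → ℂ} (hK : Measurable K) {B : ℝ} (hB : ∀ s, ‖K s‖ ≤ B)
    (hconv : ∀ᵐ s, ∫ v, K (s - v) ∂ρ = 0) :
    ∫ y, K y * (𝓕⁻ ψ) y = 0 := by
  obtain ⟨h, hh⟩ := exists_schwartz_fourierInv_eq_integral hmom hne ψ hψ hψc
  have hint : Integrable (fun z : ℝ × ℝ => K (z.1 - z.2) * h z.1) (volume.prod ρ) := by
    have hb : Integrable (fun z : ℝ × ℝ => h z.1 * (1 : ℂ)) (volume.prod ρ) :=
      Integrable.mul_prod h.integrable (integrable_const (1 : ℂ))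
    simp only [mul_one] at hb
    refine hb.bdd_mul (c := B) ?_ (ae_of_all _ fun z => hB _)
    exact (hK.comp (measurable_fst.sub measurable_snd)).aestronglyMeasurable
  calc ∫ y, K y * (𝓕⁻ ψ) y = ∫ y, ∫ v, K y * h (y + v) ∂ρ := by
        simp_rw [hh, integral_const_mul]
    _ = ∫ v, (∫ y, K y * h (y + v)) ∂ρ := by
        apply integral_integral_swap
        have hmp : MeasurePreserving (fun z : ℝ × ℝ => (z.1 + z.2, z.2)) (volume.prod ρ)
            (volume.prod ρ) := measurePreserving_add_prod (μ := volume) (ν := ρ)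
        have := hmp.integrable_comp_of_integrable hint
        simpa [Function.uncurry_def, Function.comp_def] using this
    _ = ∫ v, (∫ s, K (s - v) * h s) ∂ρ := by
        congr 1
        ext v
        rw [← integral_sub_right_eq_self _ v]
        simp
    _ = ∫ s, ∫ v, K (s - v) * h s ∂ρ := (integral_integral_swap hint).symm
    _ = 0 := by
        simp_rw [integral_mul_const]
        rw [integral_congr_ae (g := fun _ => (0 : ℂ))]
        · simp
        · filter_upwards [hconv] with s hs
          simp [hs]

open FourierTransform in
/-- Cancellation: a bounded function whose convolution with `ρ` vanishes almost everywhere is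
zero at each of its continuity points. -/
theorem eq_zero_of_conv_eq_zero {ρ : Measure ℝ} [IsFiniteMeasure ρ]
    (hmom : ∀ k : ℕ, MemLp id (k : ℝ≥0∞) ρ) (hne : ∀ t, charFun ρ t ≠ 0)
    {K : ℝ → ℂ} (hK : Measurable K) {B : ℝ} (hB : ∀ s, ‖K s‖ ≤ B)
    (hconv : ∀ᵐ s, ∫ v, K (s - v) ∂ρ = 0) {x : ℝ} (hx : ContinuousAt K x) : K x = 0 := by
  let b : ContDiffBump (0 : ℝ) := ⟨1, 2, one_pos, one_lt_two⟩
  set ψ : ℝ → ℂ := fun ξ => ((b ξ : ℝ) : ℂ) with hψdef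
  have hψ : ContDiff ℝ (⊤ : ℕ∞) ψ := Complex.ofRealCLM.contDiff.comp b.contDiff
  have hψc : HasCompactSupport ψ :=
    b.hasCompactSupport.comp_left (g := fun r : ℝ => (r : ℂ)) (by simp)
  set g : SchwartzMap ℝ ℂ := 𝓕⁻ (hψc.toSchwartzMap hψ) with hg
  have hgv : ∀ y, g y = (𝓕⁻ ψ) y := fun y => by
    rw [hg, SchwartzMap.fourierInv_coe]; rfl
  have hg1 : ∫ y, g y = 1 := by
    have h1 : (𝓕 g) 0 = ψ 0 := by
      rw [hg, FourierTransform.fourier_fourierInv_eq]; rfl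
    rw [SchwartzMap.fourier_coe, Real.fourier_eq'] at h1
    have h2 : b 0 = 1 := b.one_of_mem_closedBall (by simp [b])
    simpa [hψdef, h2] using h1
  have key : ∀ n : ℕ, ∫ z, K (x + z / (n + 1)) * g z = 0 := by
    intro n
    have hn : (0 : ℝ) < n + 1 := by positivity
    have hmeas : Measurable (fun v : ℝ => ((n : ℝ) + 1) * v) := by fun_prop
    simp_rw [hgv]
    refine integral_mul_fourierInv_eq_zero (ρ := ρ.map (fun v => ((n : ℝ) + 1) * v)) ?_ ?_ ψ hψ hψc
      (K := fun z => K (x + z / (n + 1))) (by fun_prop) (B := B) (fun s => hB _) ?_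
    · intro k
      rw [memLp_map_measure_iff (by fun_prop) hmeas.aemeasurable]
      exact (hmom k).const_mul _
    · intro t
      rw [charFun_map_mul]
      exact hne _
    · have h1 : ∀ z, ∫ v, K (x + (z - v) / (n + 1)) ∂(ρ.map (fun v => ((n : ℝ) + 1) * v))
          = ∫ v, K ((x + z / (n + 1)) - v) ∂ρ := by
        intro z
        rw [integral_map hmeas.aemeasurable
          (Measurable.aestronglyMeasurable (by fun_prop))]
        congr 1
        ext v
        congr 1
        field_simp
        ring
      simp_rw [h1]
      have hq : Measure.QuasiMeasurePreserving (fun z : ℝ => x + z / (n + 1)) volume volume := by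
        refine (measurePreserving_add_left volume x).quasiMeasurePreserving.comp ?_
        refine ⟨by fun_prop, ?_⟩
        have : (fun z : ℝ => z / ((n : ℝ) + 1)) = fun z => ((n : ℝ) + 1)⁻¹ * z := by
          ext z; rw [div_eq_inv_mul]
        rw [this, Real.map_volume_mul_left (by positivity)]
        exact Measure.smul_absolutelyContinuous
      exact hq.ae hconv
  have hlim : Tendsto (fun n : ℕ => ∫ z, K (x + z / (n + 1)) * g z) atTop
      (𝓝 (∫ z, K x * g z)) := by
    refine tendsto_integral_of_dominated_convergence (fun z => B * ‖g z‖) ?_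
      (g.integrable.norm.const_mul B) ?_ ?_
    · intro n
      exact ((hK.comp (by fun_prop)).aestronglyMeasurable).mul
        g.continuous.aestronglyMeasurable
    · intro n
      refine ae_of_all _ fun z => ?_
      rw [norm_mul]
      gcongr
      exact hB _
    · refine ae_of_all _ fun z => Tendsto.mul_const _ ?_
      refine hx.tendsto.comp ?_
      have h2 : Tendsto (fun n : ℕ => z / ((n : ℝ) + 1)) atTop (𝓝 0) :=
        tendsto_const_nhds.div_atTop (tendsto_natCast_atTop_atTop.atTop_add tendsto_const_nhds)
      simpa using h2.const_add x
  simp_rw [key] at hlim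
  have := tendsto_nhds_unique hlim tendsto_const_nhds
  rwa [integral_const_mul, hg1, mul_one] at this

/-- Helly's selection theorem for antitone functions. -/
theorem exists_subseq_tendsto_of_antitone {f : ℕ → ℝ → ℝ} (hf : ∀ n, Antitone (f n))
    (hb : ∀ s, ∃ B, ∀ n, |f n s| ≤ B) :
    ∃ φ : ℕ → ℕ, StrictMono φ ∧ ∃ L : ℝ → ℝ, Antitone L ∧ ∀ s, ContinuousAt L s →
      Tendsto (fun n => f (φ n) s) atTop (𝓝 (L s)) := by
  choose B hB using hb
  have hcomp : IsCompact (Set.pi Set.univ (fun q : ℚ => Set.Icc (-B q) (B q))) :=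
    isCompact_univ_pi fun q => isCompact_Icc
  obtain ⟨a, -, φ, hφ, ha⟩ := hcomp.tendsto_subseq (x := fun n (q : ℚ) => f n q)
    (fun n q _ => by simpa [abs_le] using hB q n)
  rw [tendsto_pi_nhds] at ha
  have haq : ∀ q : ℚ, Tendsto (fun n => f (φ n) q) atTop (𝓝 (a q)) := ha
  have hanti : Antitone a := fun p q hpq =>
    le_of_tendsto_of_tendsto' (haq q) (haq p) fun n => hf _ (by exact_mod_cast hpq)
  have hne : ∀ s : ℝ, Nonempty {q : ℚ // (q : ℝ) < s} := fun s => by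
    obtain ⟨q, hq⟩ := exists_rat_lt s
    exact ⟨⟨q, hq⟩⟩
  set L : ℝ → ℝ := fun s => ⨅ q : {q : ℚ // (q : ℝ) < s}, a q with hL
  have hbdd : ∀ s : ℝ, BddBelow (Set.range fun q : {q : ℚ // (q : ℝ) < s} => a q) := fun s => by
    obtain ⟨p, hp⟩ := exists_rat_gt s
    refine ⟨a p, ?_⟩
    rintro _ ⟨q, rfl⟩
    exact hanti (by exact_mod_cast (q.2.trans hp).le)
  have hLle : ∀ (s : ℝ) (q : ℚ), (q : ℝ) < s → L s ≤ a q := fun s q hq =>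
    ciInf_le (hbdd s) ⟨q, hq⟩
  refine ⟨φ, hφ, L, ?_, ?_⟩
  · intro s t hst
    have := hne s
    exact le_ciInf fun q => hLle t q (q.2.trans_le hst)
  · intro s hs
    refine tendsto_order.2 ⟨fun c hc => ?_, fun c hc => ?_⟩
    · have h1 : ∀ᶠ t in 𝓝[>] s, c < L t :=
        nhdsWithin_le_nhds (hs.tendsto.eventually (lt_mem_nhds hc))
      obtain ⟨t, hct, hst⟩ := (h1.and self_mem_nhdsWithin).exists
      obtain ⟨q, hsq, hqt⟩ := exists_rat_btwn (show s < t from hst)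
      filter_upwards [(haq q).eventually (lt_mem_nhds (hct.trans_le (hLle t q hqt)))] with n hn
      exact hn.trans_le (hf _ hsq.le)
    · have := hne s
      obtain ⟨q, hq⟩ := exists_lt_of_ciInf_lt hc
      filter_upwards [(haq q).eventually (gt_mem_nhds hq)] with n hn
      exact (hf _ q.2.le).trans_lt hn

/-- Tauberian cancellation along a sequence: if `f n` are antitone and the tilted convolutions
`∫ e^{α(s-v)} f n (s-v) dρ(v)` converge to `1`, then `f n 0` converges to `1 / ρ(ℝ)` along a
subsequence. -/
theorem exists_subseq_tendsto_of_conv {ρ : Measure ℝ} [IsFiniteMeasure ρ] {α ε C C' : ℝ}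
    (hα : 0 < α) (hε : 0 < ε)
    (hexp : Integrable (fun v => Real.exp (ε * v)) ρ)
    (hexp' : Integrable (fun v => Real.exp (-ε * v)) ρ)
    (hne : ∀ t, charFun ρ t ≠ 0)
    {f : ℕ → ℝ → ℝ} (hf : ∀ n, Antitone (f n)) (hf0 : ∀ n s, 0 ≤ f n s)
    (hdom : ∀ n s, Real.exp (α * s) * f n s ≤ C * (Real.exp (ε * s) + Real.exp (-ε * s)))
    (hbd : ∀ s, ∀ᶠ n in atTop, Real.exp (α * s) * f n s ≤ C')
    (hconv : ∀ s, Tendsto (fun n => ∫ v, Real.exp (α * (s - v)) * f n (s - v) ∂ρ) atTop (𝓝 1)) :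
    ∃ φ : ℕ → ℕ, StrictMono φ ∧
      Tendsto (fun n => f (φ n) 0) atTop (𝓝 (1 / ρ.real Set.univ)) := by
  have hmom : ∀ k : ℕ, MemLp id (k : ℝ≥0∞) ρ := by
    intro k
    have h := integrable_pow_abs_of_integrable_exp_mul (X := id) (μ := ρ) hε.ne' hexp hexp' k
    rcases Nat.eq_zero_or_pos k with rfl | hk
    · simpa using (measurable_id.aestronglyMeasurable : AEStronglyMeasurable (id : ℝ → ℝ) ρ)
    · rw [← integrable_norm_rpow_iff measurable_id.aestronglyMeasurable (by positivity) (by simp)]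
      simpa using h
  set m := ρ.real Set.univ with hm
  have hm0 : 0 < m := by
    refine lt_of_le_of_ne measureReal_nonneg fun h => hne 0 ?_
    rw [charFun_zero, ← hm, ← h]; simp
  obtain ⟨φ, hφ, L, hL, hLc⟩ := exists_subseq_tendsto_of_antitone hf (fun s => by
    refine ⟨C * (Real.exp (ε * s) + Real.exp (-ε * s)) / Real.exp (α * s), fun n => ?_⟩
    rw [abs_of_nonneg (hf0 n s), le_div_iff₀' (Real.exp_pos _)]
    exact hdom n s)
  refine ⟨φ, hφ, ?_⟩
  set D : Set ℝ := {s | ¬ ContinuousAt L s} with hD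
  have hDc : D.Countable := hL.countable_not_continuousAt
  have hdense : Dense Dᶜ := hDc.dense_compl ℝ
  have hLlim : ∀ s, s ∉ D → Tendsto (fun n => f (φ n) s) atTop (𝓝 (L s)) := fun s hs =>
    hLc s (by simpa [hD] using hs)
  have hL0 : ∀ s, 0 ≤ L s := by
    intro s
    obtain ⟨t, ht, hst, -⟩ := hdense.exists_between (lt_add_one s)
    exact (ge_of_tendsto' (hLlim t ht) fun n => hf0 _ t).trans (hL hst.le)
  have hLC : ∀ s, s ∉ D → Real.exp (α * s) * L s ≤ C' := fun s hs =>
    le_of_tendsto ((hLlim s hs).const_mul _) (hφ.tendsto_atTop.eventually (hbd s))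
  set K : ℝ → ℝ := fun s => Real.exp (α * s) * L s with hKdef
  have hKm : Measurable K := by
    have := hL.measurable
    fun_prop
  have hK0 : ∀ s, 0 ≤ K s := fun s => mul_nonneg (Real.exp_pos _).le (hL0 s)
  have hKB : ∀ s, K s ≤ Real.exp α * C' := by
    intro s
    obtain ⟨t, ht, hst, hts⟩ := hdense.exists_between (sub_one_lt s)
    calc K s ≤ Real.exp (α * (t + 1)) * L t := by
          apply mul_le_mul _ (hL hts.le) (hL0 s) (Real.exp_pos _).le
          gcongr
          linarith
      _ = Real.exp α * (Real.exp (α * t) * L t) := by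
          rw [mul_add, Real.exp_add]; ring_nf
      _ ≤ _ := by gcongr; exact hLC t ht
  have hae : ∀ᵐ s : ℝ, ∀ᵐ v ∂ρ, s - v ∉ D := by
    refine (Measure.ae_ae_comm (μ := ρ) (ν := volume) (p := fun v s => s - v ∉ D) ?_).1 ?_
    · exact (measurable_snd.sub measurable_fst) hDc.measurableSet.compl
    · refine ae_of_all _ fun v => ?_
      exact (measurePreserving_sub_right volume v).quasiMeasurePreserving.ae
        (hDc.ae_notMem volume)
  have hKconv : ∀ᵐ s : ℝ, ∫ v, K (s - v) ∂ρ = 1 := by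
    filter_upwards [hae] with s hs
    refine tendsto_nhds_unique ?_ ((hconv s).comp hφ.tendsto_atTop)
    refine tendsto_integral_of_dominated_convergence
      (fun v => C * (Real.exp (ε * (s - v)) + Real.exp (-ε * (s - v)))) ?_ ?_ ?_ ?_
    · intro n
      have := (hf (φ n)).measurable
      exact Measurable.aestronglyMeasurable (by fun_prop)
    · refine Integrable.const_mul (Integrable.add ?_ ?_) _
      · refine (hexp'.const_mul (Real.exp (ε * s))).congr (ae_of_all _ fun v => ?_)
        simp only [← Real.exp_add]; ring_nf
      · refine (hexp.const_mul (Real.exp (-ε * s))).congr (ae_of_all _ fun v => ?_)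
        simp only [← Real.exp_add]; ring_nf
    · intro n
      refine ae_of_all _ fun v => ?_
      rw [Real.norm_of_nonneg (mul_nonneg (Real.exp_pos _).le (hf0 _ _))]
      exact hdom _ _
    · filter_upwards [hs] with v hv
      exact (hLlim _ hv).const_mul _
  have hKval : ∀ s, s ∉ D → K s = 1 / m := by
    intro s hs
    have hcont : ContinuousAt (fun s => ((K s - 1 / m : ℝ) : ℂ)) s := by
      have h1 : ContinuousAt L s := by simpa [hD] using hs
      exact Complex.continuous_ofReal.continuousAt.comp
        (((by fun_prop : ContinuousAt (fun s => Real.exp (α * s)) s).mul h1).sub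
          continuousAt_const)
    have := eq_zero_of_conv_eq_zero hmom hne (K := fun s => ((K s - 1 / m : ℝ) : ℂ))
      (by fun_prop) (B := Real.exp α * C' + 1 / m) (fun s => ?_) ?_ hcont
    · have h2 : K s - 1 / m = 0 := by exact_mod_cast this
      linarith
    · rw [Complex.norm_real, Real.norm_eq_abs, abs_le]
      have : 0 < 1 / m := by positivity
      constructor <;> linarith [hK0 s, hKB s]
    · filter_upwards [hKconv] with s hs
      rw [integral_complex_ofReal, integral_sub _ (integrable_const _), hs, integral_const]
      · simp only [smul_eq_mul, ← hm]
        rw [mul_one_div_cancel hm0.ne']; simp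
      · refine Integrable.of_bound (C := Real.exp α * C')
          (Measurable.aestronglyMeasurable (by fun_prop)) (ae_of_all _ fun v => ?_)
        rw [Real.norm_of_nonneg (hK0 _)]
        exact hKB _
  have hLval : ∀ s, s ∉ D → L s = Real.exp (-α * s) / m := by
    intro s hs
    have := hKval s hs
    simp only [hKdef] at this
    rw [neg_mul, Real.exp_neg]
    field_simp at this ⊢
    linarith
  have hcont : ContinuousAt (fun s => Real.exp (-α * s) / m) 0 := by fun_prop
  have h00 : Real.exp (-α * 0) / m = 1 / m := by simp
  rw [← h00]
  refine tendsto_order.2 ⟨fun c hc => ?_, fun c hc => ?_⟩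
  · obtain ⟨δ, hδ, hball⟩ := Metric.eventually_nhds_iff.1
      (hcont.tendsto.eventually (lt_mem_nhds hc))
    obtain ⟨t, ht, h0t, htδ⟩ := hdense.exists_between hδ
    have h1 := hball (show dist t 0 < δ by simpa [abs_of_pos h0t] using htδ)
    rw [← hLval t ht] at h1
    filter_upwards [(hLlim t ht).eventually (lt_mem_nhds h1)] with n hn
    exact hn.trans_le (hf _ h0t.le)
  · obtain ⟨δ, hδ, hball⟩ := Metric.eventually_nhds_iff.1
      (hcont.tendsto.eventually (gt_mem_nhds hc))
    obtain ⟨t, ht, h0t, htδ⟩ := hdense.exists_between (neg_lt_zero.2 hδ)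
    have h1 := hball (show dist t 0 < δ by
      rw [Real.dist_eq, sub_zero, abs_of_neg htδ]; linarith)
    rw [← hLval t ht] at h1
    filter_upwards [(hLlim t ht).eventually (gt_mem_nhds h1)] with n hn
    exact (hf _ htδ.le).trans_lt hn

/-- A Potter-type bound for bounded monotone regularly varying functions. -/
theorem RegVarying.potter {G : ℝ → ℝ} {α δ : ℝ} (hG : RegVarying G (-α)) (hanti : Antitone G)
    (hG1 : ∀ x, G x ≤ 1) (hδ : 0 < δ) (hδα : δ < α) :
    ∃ C > 0, ∃ x₀ > 0, ∀ x ≥ x₀, ∀ y > 0,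
      G (x * y) ≤ C * G x * (y ^ (-(α + δ)) + y ^ (-(α - δ))) := by
  have h2 := hG.2 2 two_pos
  have hlo : (2 : ℝ) ^ (-(α + δ)) < 2 ^ (-α) :=
    Real.rpow_lt_rpow_of_exponent_lt one_lt_two (by linarith)
  have hhi : (2 : ℝ) ^ (-α) < 2 ^ (-(α - δ)) :=
    Real.rpow_lt_rpow_of_exponent_lt one_lt_two (by linarith)
  obtain ⟨x₁, hx₁⟩ := eventually_atTop.1
    ((h2.eventually (lt_mem_nhds hlo)).and (h2.eventually (gt_mem_nhds hhi)))
  set x₀ := max x₁ 1 with hx₀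
  have hx₀1 : 1 ≤ x₀ := le_max_right _ _
  have hx₀0 : 0 < x₀ := by linarith
  set a : ℝ := 2 ^ (α + δ) with ha
  set b : ℝ := 2 ^ (-(α - δ)) with hb
  have ha1 : 1 ≤ a := Real.one_le_rpow one_le_two (by linarith)
  have hb0 : 0 < b := by positivity
  have hstep : ∀ x ≥ x₀, G x ≤ a * G (2 * x) ∧ G (2 * x) ≤ b * G x := by
    intro x hx
    have hGx := hG.1 x (by linarith)
    obtain ⟨h3, h4⟩ := hx₁ x ((le_max_left _ _).trans hx)
    rw [lt_div_iff₀ hGx, Real.rpow_neg two_pos.le, ← ha] at h3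
    rw [div_lt_iff₀ hGx] at h4
    refine ⟨?_, h4.le⟩
    have : 0 < a := by linarith
    rw [inv_mul_eq_div, div_lt_iff₀ this] at h3
    linarith
  have hup : ∀ (n : ℕ), ∀ x ≥ x₀, G (2 ^ n * x) ≤ b ^ n * G x := by
    intro n
    induction n with
    | zero => intro x _; simp
    | succ n ih =>
      intro x hx
      have h5 : x₀ ≤ 2 ^ n * x :=
        hx.trans (le_mul_of_one_le_left (by linarith) (one_le_pow₀ one_le_two))
      calc G (2 ^ (n + 1) * x) = G (2 * (2 ^ n * x)) := by ring_nf
        _ ≤ b * G (2 ^ n * x) := (hstep _ h5).2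
        _ ≤ b * (b ^ n * G x) := by gcongr; exact ih x hx
        _ = b ^ (n + 1) * G x := by ring
  set G' : ℝ → ℝ := fun z => G (max z x₀) with hG'
  have hG'step : ∀ z > 0, G' z ≤ a * G' (2 * z) := by
    intro z hz
    have hpos : 0 < G' (2 * z) := hG.1 _ (lt_max_of_lt_right hx₀0)
    rcases le_or_gt x₀ z with h | h
    · simp only [hG', max_eq_left h, max_eq_left (show x₀ ≤ 2 * z by linarith)]
      exact (hstep z h).1
    · have h6 : G' z = G x₀ := by simp only [hG', max_eq_right h.le]
      rw [h6]
      refine (hstep x₀ le_rfl).1.trans ?_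
      gcongr
      exact hanti (max_le (by linarith) (by linarith))
  have hdown : ∀ (n : ℕ), ∀ z > 0, G' z ≤ a ^ n * G' (2 ^ n * z) := by
    intro n
    induction n with
    | zero => intro x _; simp
    | succ n ih =>
      intro z hz
      calc G' z ≤ a ^ n * G' (2 ^ n * z) := ih z hz
        _ ≤ a ^ n * (a * G' (2 * (2 ^ n * z))) := by gcongr; exact hG'step _ (by positivity)
        _ = a ^ (n + 1) * G' (2 ^ (n + 1) * z) := by ring_nf
  have hGx₀ : 0 < G x₀ := hG.1 _ hx₀0
  have hpw : ∀ (c : ℝ) (n : ℕ), ((2 : ℝ) ^ c) ^ n = (2 ^ n) ^ c := fun c n => by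
    rw [← Real.rpow_natCast, ← Real.rpow_mul two_pos.le, mul_comm c, Real.rpow_mul two_pos.le,
      Real.rpow_natCast]
  set c₁ : ℝ := 2 ^ (α - δ) with hc₁
  have hc₁0 : 0 < c₁ := by positivity
  refine ⟨a / G x₀ + c₁, by positivity, x₀, hx₀0, fun x hx y hy => ?_⟩
  have hx0 : 0 < x := by linarith
  have hGx := hG.1 x hx0
  have hp1 : 0 < y ^ (-(α + δ)) := by positivity
  have hp2 : 0 < y ^ (-(α - δ)) := by positivity
  rcases le_total 1 y with h | h
  · obtain ⟨n, hn1, hn2⟩ := exists_nat_pow_near h (one_lt_two (α := ℝ))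
    have h7 : b ^ n ≤ c₁ * y ^ (-(α - δ)) := by
      rw [hb, hpw]
      calc ((2 : ℝ) ^ n) ^ (-(α - δ)) ≤ (y / 2) ^ (-(α - δ)) := by
            apply Real.rpow_le_rpow_of_nonpos (by positivity) _ (by linarith)
            rw [pow_succ] at hn2
            linarith
        _ = c₁ * y ^ (-(α - δ)) := by
            rw [Real.div_rpow hy.le two_pos.le, Real.rpow_neg two_pos.le, div_inv_eq_mul, mul_comm]
    calc G (x * y) ≤ G (2 ^ n * x) := by
          apply hanti
          rw [mul_comm]
          gcongr
      _ ≤ b ^ n * G x := hup n x hx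
      _ ≤ c₁ * y ^ (-(α - δ)) * G x := by gcongr
      _ = c₁ * G x * (0 + y ^ (-(α - δ))) := by ring
      _ ≤ _ := by
        gcongr
        have : 0 < a / G x₀ := by positivity
        linarith
  · obtain ⟨n, hn1, hn2⟩ := exists_nat_pow_near ((one_le_inv₀ hy).2 h) (one_lt_two (α := ℝ))
    have h7 : a ^ (n + 1) ≤ a * y ^ (-(α + δ)) := by
      rw [pow_succ, mul_comm]
      gcongr
      rw [ha, hpw, Real.rpow_neg hy.le, ← Real.inv_rpow hy.le]
      exact Real.rpow_le_rpow (by positivity) hn1 (by linarith)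
    have h8 : G (x * y) * G x₀ ≤ G' (x * y) := by
      rcases le_total x₀ (x * y) with h9 | h9
      · simp only [hG', max_eq_left h9]
        exact mul_le_of_le_one_right (hG.1 _ (by positivity)).le (hG1 _)
      · simp only [hG', max_eq_right h9]
        exact mul_le_of_le_one_left hGx₀.le (hG1 _)
    have h10 : G' (2 ^ (n + 1) * (x * y)) ≤ G x := by
      apply hanti
      refine le_max_of_le_left ?_
      have : 1 ≤ 2 ^ (n + 1) * y := by
        rw [inv_lt_iff_one_lt_mul₀ hy] at hn2
        linarith
      calc x = x * 1 := (mul_one x).symm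
        _ ≤ x * (2 ^ (n + 1) * y) := by gcongr
        _ = _ := by ring
    have h11 : G' (x * y) ≤ a * y ^ (-(α + δ)) * G x := by
      refine (hdown (n + 1) _ (by positivity)).trans ?_
      calc a ^ (n + 1) * G' (2 ^ (n + 1) * (x * y)) ≤ a ^ (n + 1) * G x := by gcongr
        _ ≤ _ := by gcongr
    calc G (x * y) ≤ a * y ^ (-(α + δ)) * G x / G x₀ := by
          rw [le_div_iff₀ hGx₀]; exact h8.trans h11
      _ = a / G x₀ * G x * (y ^ (-(α + δ)) + 0) := by ring
      _ ≤ _ := by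
        gcongr
        linarith

/-- A function dominated by a rescaled regularly varying one inherits the Potter-type bound. -/
theorem RegVarying.potter_of_le {F G : ℝ → ℝ} {α δ η p : ℝ} (hG : RegVarying G (-α))
    (hanti : Antitone G) (hG1 : ∀ x, G x ≤ 1) (hδ : 0 < δ) (hδα : δ < α) (hη : 0 < η) (hp : 0 < p)
    (hF : ∀ z > 0, p * F z ≤ G (η * z)) :
    ∃ C > 0, ∃ x₀ > 0, ∀ x ≥ x₀, ∀ θ > 0,
      F (x / θ) ≤ C * G x * (θ ^ (α + δ) + θ ^ (α - δ)) := by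
  obtain ⟨C, hC, x₀, hx₀, h⟩ := hG.potter hanti hG1 hδ hδα
  set c := η ^ (-(α + δ)) + η ^ (-(α - δ)) with hc
  have hc0 : 0 < c := by positivity
  refine ⟨C * c / p, by positivity, x₀, hx₀, fun x hx θ hθ => ?_⟩
  have hx0 : 0 < x := by linarith
  have hGx := hG.1 x hx0
  have h1 := hF (x / θ) (by positivity)
  have h2 := h x hx (η / θ) (by positivity)
  have h3 : η * (x / θ) = x * (η / θ) := by ring
  rw [h3] at h1
  have h4 : ∀ r : ℝ, (η / θ) ^ (-r) = η ^ (-r) * θ ^ r := fun r => by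
    rw [Real.div_rpow hη.le hθ.le, Real.rpow_neg hθ.le, div_inv_eq_mul]
  rw [h4, h4] at h2
  have h5 : η ^ (-(α + δ)) * θ ^ (α + δ) + η ^ (-(α - δ)) * θ ^ (α - δ)
      ≤ c * (θ ^ (α + δ) + θ ^ (α - δ)) := by
    have e1 : 0 < η ^ (-(α + δ)) * θ ^ (α - δ) := by positivity
    have e2 : 0 < η ^ (-(α - δ)) * θ ^ (α + δ) := by positivity
    rw [hc]
    nlinarith
  have h6 : p * F (x / θ) ≤ C * G x * (c * (θ ^ (α + δ) + θ ^ (α - δ))) :=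
    h1.trans (h2.trans (by gcongr))
  rw [show C * c / p * G x * (θ ^ (α + δ) + θ ^ (α - δ))
    = C * G x * (c * (θ ^ (α + δ) + θ ^ (α - δ))) / p by ring, le_div_iff₀ hp]
  linarith

/-- Minkowski's inequality for series of `ℝ≥0∞`-valued functions. -/
theorem lintegral_tsum_rpow_le {μ : Measure Ω} {f : ℕ → Ω → ℝ≥0∞} (hf : ∀ t, Measurable (f t))
    {r : ℝ} (hr : 1 ≤ r) :
    ∫⁻ ω, (∑' t, f t ω) ^ r ∂μ ≤ (∑' t, (∫⁻ ω, f t ω ^ r ∂μ) ^ (1 / r)) ^ r := by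
  have hr0 : 0 < r := by linarith
  have hsum : ∀ n : ℕ, (∫⁻ ω, (∑ t ∈ Finset.range n, f t ω) ^ r ∂μ) ^ (1 / r)
      ≤ ∑ t ∈ Finset.range n, (∫⁻ ω, f t ω ^ r ∂μ) ^ (1 / r) := by
    intro n
    induction n with
    | zero => simp [ENNReal.zero_rpow_of_pos hr0, hr0]
    | succ n ih =>
      simp_rw [Finset.sum_range_succ]
      have h := ENNReal.lintegral_Lp_add_le (μ := μ) (p := r)
        (f := fun ω => ∑ t ∈ Finset.range n, f t ω) (g := f n)
        (Finset.measurable_sum _ fun t _ => hf t).aemeasurable (hf n).aemeasurable hr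
      exact h.trans (by gcongr)
  have hsup : ∀ ω, (∑' t, f t ω) ^ r = ⨆ n : ℕ, (∑ t ∈ Finset.range n, f t ω) ^ r := fun ω => by
    rw [ENNReal.tsum_eq_iSup_nat]
    exact (ENNReal.orderIsoRpow r hr0).map_iSup _
  simp_rw [hsup]
  rw [lintegral_iSup]
  · refine iSup_le fun n => ?_
    have h1 := (hsum n).trans (ENNReal.sum_le_tsum _)
    rw [one_div, ENNReal.rpow_inv_le_iff hr0, ← one_div] at h1
    exact h1
  · exact fun n => (Finset.measurable_sum _ fun t _ => hf t).pow_const _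
  · intro m n hmn ω
    dsimp only
    gcongr

/-- Truncated moments from a polynomial tail bound. -/
theorem lintegral_truncation_rpow_le {μ : Measure Ω} {Z : Ω → ℝ} (hZ : Measurable Z)
    (hZ0 : ∀ᵐ ω ∂μ, 0 ≤ Z ω) {x r κ b : ℝ} (hx : 0 < x) (hr : 0 < r) (hκ : κ < r) (hb : 0 ≤ b)
    (htail : ∀ u, 0 < u → u ≤ 1 → μ {ω | u * x < Z ω} ≤ ENNReal.ofReal (b * u ^ (-κ))) :
    ∫⁻ ω, ENNReal.ofReal ({ω | Z ω ≤ x}.indicator Z ω) ^ r ∂μ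
      ≤ ENNReal.ofReal (x ^ r * (r / (r - κ)) * b) := by
  set f : Ω → ℝ := fun ω => {ω | Z ω ≤ x}.indicator Z ω / x with hf
  have hfm : Measurable f := (hZ.indicator (measurableSet_le hZ measurable_const)).div_const x
  have hf0 : 0 ≤ᵐ[μ] f := by
    filter_upwards [hZ0] with ω hω
    exact div_nonneg (Set.indicator_apply_nonneg fun _ => hω) hx.le
  have h1 : ∀ᵐ ω ∂μ, ENNReal.ofReal ({ω | Z ω ≤ x}.indicator Z ω) ^ r
      = ENNReal.ofReal (x ^ r) * ENNReal.ofReal (f ω ^ r) := by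
    filter_upwards [hf0] with ω hω
    have hω : 0 ≤ f ω := hω
    rw [← ENNReal.ofReal_mul (by positivity), ← Real.mul_rpow hx.le hω,
      ENNReal.ofReal_rpow_of_nonneg _ hr.le]
    · simp only [hf]
      congr 2
      field_simp
    · have : {ω | Z ω ≤ x}.indicator Z ω = f ω * x := by simp only [hf]; field_simp
      rw [this]; positivity
  rw [lintegral_congr_ae h1, lintegral_const_mul _ (by fun_prop),
    lintegral_rpow_eq_lintegral_meas_lt_mul μ hf0 hfm.aemeasurable hr]
  have h2 : ∀ t : ℝ, t ∈ Set.Ioi (0 : ℝ) → μ {a | t < f a} * ENNReal.ofReal (t ^ (r - 1))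
      ≤ (Set.Ioc (0 : ℝ) 1).indicator (fun t => ENNReal.ofReal (b * t ^ (r - κ - 1))) t := by
    intro t ht
    have ht : 0 < t := ht
    by_cases h : t ≤ 1
    · rw [Set.indicator_of_mem (show t ∈ Set.Ioc (0 : ℝ) 1 from ⟨ht, h⟩)]
      have h3 : μ {a | t < f a} ≤ ENNReal.ofReal (b * t ^ (-κ)) := by
        refine (measure_mono fun ω hω => ?_).trans (htail t ht h)
        have hω : t < f ω := hω
        simp only [hf, lt_div_iff₀ hx] at hω
        by_cases hm : Z ω ≤ x
        · rwa [Set.indicator_of_mem (show ω ∈ {ω | Z ω ≤ x} from hm)] at hω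
        · rw [Set.indicator_of_notMem (show ω ∉ {ω | Z ω ≤ x} from hm)] at hω
          exact absurd hω (by have : 0 < t * x := by positivity
                              linarith)
      refine (mul_le_mul_left h3 _).trans ?_
      rw [← ENNReal.ofReal_mul (by positivity), mul_assoc, ← Real.rpow_add ht]
      apply le_of_eq
      ring_nf
    · have : {a | t < f a} = ∅ := by
        ext ω
        simp only [Set.mem_ofPred_eq, Set.mem_empty_iff_false, iff_false, not_lt, hf]
        refine le_trans ?_ (not_le.1 h).le
        rw [div_le_one hx]
        exact Set.indicator_apply_le' (fun h => h) fun _ => hx.le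
      simp [this]
  have h4 : ∫⁻ t in Set.Ioi (0 : ℝ), μ {a | t < f a} * ENNReal.ofReal (t ^ (r - 1))
      ≤ ENNReal.ofReal (b / (r - κ)) := by
    calc _ ≤ ∫⁻ t in Set.Ioi (0 : ℝ),
          (Set.Ioc (0 : ℝ) 1).indicator (fun t => ENNReal.ofReal (b * t ^ (r - κ - 1))) t :=
          setLIntegral_mono' measurableSet_Ioi h2
      _ ≤ ∫⁻ t, (Set.Ioc (0 : ℝ) 1).indicator (fun t => ENNReal.ofReal (b * t ^ (r - κ - 1))) t :=
          setLIntegral_le_lintegral _ _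
      _ = ∫⁻ t in Set.Ioc (0 : ℝ) 1, ENNReal.ofReal (b * t ^ (r - κ - 1)) :=
          lintegral_indicator measurableSet_Ioc _
      _ = ENNReal.ofReal (∫ t in Set.Ioc (0 : ℝ) 1, b * t ^ (r - κ - 1)) := by
          rw [ofReal_integral_eq_lintegral_ofReal]
          · have := (intervalIntegral.intervalIntegrable_rpow' (a := 0) (b := 1)
              (r := r - κ - 1) (by linarith)).const_mul b
            rwa [intervalIntegrable_iff_integrableOn_Ioc_of_le zero_le_one] at this
          · filter_upwards [ae_restrict_mem measurableSet_Ioc] with t ht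
            have := ht.1
            exact mul_nonneg hb (Real.rpow_nonneg this.le _)
      _ = ENNReal.ofReal (b / (r - κ)) := by
          rw [← intervalIntegral.integral_of_le zero_le_one, intervalIntegral.integral_const_mul,
            integral_rpow (Or.inl (by linarith))]
          congr 1
          rw [sub_add_cancel, Real.one_rpow, Real.zero_rpow (by linarith), sub_zero, mul_one_div]
  calc _ ≤ ENNReal.ofReal (x ^ r) * (ENNReal.ofReal r * ENNReal.ofReal (b / (r - κ))) := by gcongr
    _ = _ := by
      rw [← ENNReal.ofReal_mul hr.le, ← ENNReal.ofReal_mul (by positivity)]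
      congr 1
      ring

/-- Tail bound for a series of nonnegative random variables with polynomially bounded tails. -/
theorem measure_lt_tsum_le {μ : Measure Ω} {Z : ℕ → Ω → ℝ} (hZ : ∀ t, Measurable (Z t))
    (hZ0 : ∀ t, ∀ᵐ ω ∂μ, 0 ≤ Z t ω) {x r κ : ℝ} {b : ℕ → ℝ} (hx : 0 < x) (hr : 1 ≤ r)
    (hκ : κ < r) (hb : ∀ t, 0 ≤ b t)
    (htail : ∀ t u, 0 < u → u ≤ 1 → μ {ω | u * x < Z t ω} ≤ ENNReal.ofReal (b t * u ^ (-κ))) :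
    μ {ω | ENNReal.ofReal x < ∑' t, ENNReal.ofReal (Z t ω)}
      ≤ ∑' t, ENNReal.ofReal (b t)
        + ENNReal.ofReal (r / (r - κ)) * (∑' t, ENNReal.ofReal (b t) ^ (1 / r)) ^ r := by
  have hr0 : 0 < r := by linarith
  set W : ℕ → Ω → ℝ≥0∞ := fun t ω => ENNReal.ofReal ({ω | Z t ω ≤ x}.indicator (Z t) ω) with hW
  have hWm : ∀ t, Measurable (W t) := fun t =>
    ((hZ t).indicator (measurableSet_le (hZ t) measurable_const)).ennreal_ofReal
  have hsub : {ω | ENNReal.ofReal x < ∑' t, ENNReal.ofReal (Z t ω)}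
      ⊆ (⋃ t, {ω | x < Z t ω}) ∪ {ω | ENNReal.ofReal (x ^ r) ≤ (∑' t, W t ω) ^ r} := by
    intro ω hω
    by_cases h : ∃ t, x < Z t ω
    · exact Or.inl (Set.mem_iUnion.2 h)
    · push Not at h
      right
      have h1 : ∀ t, W t ω = ENNReal.ofReal (Z t ω) := fun t => by
        simp only [hW]
        rw [Set.indicator_of_mem (show ω ∈ {ω | Z t ω ≤ x} from h t)]
      simp only [Set.mem_ofPred_eq, h1]
      rw [← ENNReal.ofReal_rpow_of_pos hx]
      exact ENNReal.rpow_le_rpow (le_of_lt hω) hr0.le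
  refine (measure_mono hsub).trans ((measure_union_le _ _).trans (add_le_add ?_ ?_))
  · refine (measure_iUnion_le _).trans (ENNReal.tsum_le_tsum fun t => ?_)
    simpa using htail t 1 one_pos le_rfl
  · have hxr : ENNReal.ofReal (x ^ r) ≠ 0 := by
      have : 0 < x ^ r := by positivity
      simpa using this
    set c := r / (r - κ) with hc
    have hc0 : 0 ≤ c := div_nonneg hr0.le (by linarith)
    have h2 : ∫⁻ ω, (∑' t, W t ω) ^ r ∂μ
        ≤ ENNReal.ofReal (x ^ r) *
          (ENNReal.ofReal c * (∑' t, ENNReal.ofReal (b t) ^ (1 / r)) ^ r) := by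
      calc _ ≤ (∑' t, (∫⁻ ω, W t ω ^ r ∂μ) ^ (1 / r)) ^ r := lintegral_tsum_rpow_le hWm hr
        _ ≤ (∑' t, (ENNReal.ofReal (x ^ r * c * b t)) ^ (1 / r)) ^ r := by
            gcongr with t
            exact lintegral_truncation_rpow_le (hZ t) (hZ0 t) hx hr0 hκ (hb t) (htail t)
        _ = (∑' t, ENNReal.ofReal (x ^ r * c) ^ (1 / r) * ENNReal.ofReal (b t) ^ (1 / r)) ^ r := by
            congr 2
            ext t
            rw [ENNReal.ofReal_mul (by positivity), ENNReal.mul_rpow_of_nonneg _ _ (by positivity)]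
        _ = _ := by
            rw [ENNReal.tsum_mul_left, ENNReal.mul_rpow_of_nonneg _ _ hr0.le, ← ENNReal.rpow_mul,
              one_div_mul_cancel hr0.ne', ENNReal.rpow_one, ENNReal.ofReal_mul (by positivity),
              mul_assoc]
    have h3 := (mul_meas_ge_le_lintegral (μ := μ)
      ((Measurable.tsum hWm).pow_const r) (ENNReal.ofReal (x ^ r))).trans h2
    exact (ENNReal.mul_le_mul_iff_right hxr ENNReal.ofReal_ne_top).1 h3

/-- A Bonferroni inequality. -/
theorem sum_measureReal_le {μ : Measure Ω} [IsFiniteMeasure μ] {E : ℕ → Set Ω}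
    (hE : ∀ t, MeasurableSet (E t)) (m : ℕ) :
    ∑ t ∈ Finset.range m, μ.real (E t) ≤ μ.real (⋃ t ∈ Finset.range m, E t)
      + ∑ t ∈ Finset.range m, ∑ s ∈ Finset.range t, μ.real (E s ∩ E t) := by
  induction m with
  | zero => simp
  | succ m ih =>
    rw [Finset.sum_range_succ, Finset.sum_range_succ]
    have h1 : (⋃ t ∈ Finset.range (m + 1), E t) = (⋃ t ∈ Finset.range m, E t) ∪ E m := by
      rw [Finset.range_add_one, Finset.set_biUnion_insert, Set.union_comm]
    have h2 := measureReal_union_add_inter (μ := μ) (s := ⋃ t ∈ Finset.range m, E t) (hE m)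
      (measure_ne_top _ _) (measure_ne_top _ _)
    have h3 : μ.real ((⋃ t ∈ Finset.range m, E t) ∩ E m)
        ≤ ∑ s ∈ Finset.range m, μ.real (E s ∩ E m) := by
      rw [Set.iUnion₂_inter]
      exact measureReal_biUnion_finset_le _ _
    rw [h1]
    linarith

/-- If a finite sum of nonnegative numbers is large, then either one of them is nearly as large,
or two of them are comparable to the sum. -/
theorem exists_lt_or_exists_pair {z : ℕ → ℝ} {m : ℕ} {x w : ℝ} (hx : 0 < x)
    (hw : 0 < w) (hw2 : w < 1 / 2) (h : (1 - w) * x < ∑ t ∈ Finset.range m, z t) :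
    (∃ t ∈ Finset.range m, (1 - 2 * w) * x < z t) ∨
      ∃ t ∈ Finset.range m, ∃ s ∈ Finset.range t,
        w / (m + 1) * x < z s ∧ w / (m + 1) * x < z t := by
  by_contra! hcon
  obtain ⟨h1, h2⟩ := hcon
  set k := w / (m + 1) * x with hk
  have hk0 : 0 < k := by positivity
  have hmk : m * k ≤ w * x := by
    have : (m + 1) * k = w * x := by rw [hk]; field_simp
    nlinarith
  have hwx : 0 < w * x := by positivity
  by_cases hex : ∃ t ∈ Finset.range m, k < z t
  · obtain ⟨t, ht, hkt⟩ := hex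
    have hothers : ∀ s ∈ (Finset.range m).erase t, z s ≤ k := by
      intro s hs
      obtain ⟨hst, hsm⟩ := Finset.mem_erase.1 hs
      rcases lt_or_gt_of_ne hst with hlt | hlt
      · by_contra! hc
        exact absurd hkt (not_lt.2 (h2 t ht s (Finset.mem_range.2 hlt) hc))
      · exact h2 s hsm t (Finset.mem_range.2 hlt) hkt
    have h3 := Finset.sum_le_card_nsmul _ _ _ hothers
    rw [← Finset.add_sum_erase _ _ ht] at h
    have h4 : ((Finset.range m).erase t).card • k ≤ m * k := by
      rw [nsmul_eq_mul]
      gcongr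
      exact_mod_cast (Finset.card_erase_le).trans (by simp)
    have h5 := h1 t ht
    nlinarith
  · push Not at hex
    have h3 := Finset.sum_le_card_nsmul _ _ _ hex
    rw [Finset.card_range, nsmul_eq_mul] at h3
    nlinarith

section LargeJump

variable {μ : Measure Ω} {Z : ℕ → Ω → ℝ} {G : ℝ → ℝ} {α C x₀ r κ : ℝ}
  {M : ℕ → ℝ}

theorem summable_tail (hRV : RegVarying G (-α)) (hx₀ : 0 < x₀) (hC : 0 < C) (hM : ∀ t, 0 ≤ M t)
    (hMs : Summable M)
    (htail : ∀ t, ∀ x ≥ x₀, ∀ u, 0 < u → u ≤ 1 →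
      μ {ω | u * x < Z t ω} ≤ ENNReal.ofReal (C * G x * M t * u ^ (-κ)))
    {x : ℝ} (hx : x₀ ≤ x) :
    (∀ t, μ.real {ω | x < Z t ω} ≤ C * G x * M t) ∧ Summable fun t => μ.real {ω | x < Z t ω} := by
  have h1 : ∀ t, μ.real {ω | x < Z t ω} ≤ C * G x * M t := by
    intro t
    have h := htail t x hx 1 one_pos le_rfl
    simp only [one_mul, Real.one_rpow, mul_one] at h
    have hG := hRV.1 x (by linarith)
    exact ENNReal.toReal_le_of_le_ofReal (mul_nonneg (by positivity) (hM t)) h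
  exact ⟨h1, Summable.of_nonneg_of_le (fun t => measureReal_nonneg) h1 (hMs.mul_left _)⟩

variable [IsFiniteMeasure μ]

theorem tail_sum_upper (hZ : ∀ t, Measurable (Z t))
    (hG : ∀ x, G x = μ.real {ω | ENNReal.ofReal x < ∑' t, ENNReal.ofReal (Z t ω)})
    (hRV : RegVarying G (-α)) (hx₀ : 0 < x₀) (hC : 0 < C) (hM : ∀ t, 0 ≤ M t)
    (hMs : Summable M)
    (htail : ∀ t, ∀ x ≥ x₀, ∀ u, 0 < u → u ≤ 1 →
      μ {ω | u * x < Z t ω} ≤ ENNReal.ofReal (C * G x * M t * u ^ (-κ)))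
    (hpair : ∀ s t, s ≠ t →
      Tendsto (fun x => μ.real {ω | x < Z s ω ∧ x < Z t ω} / G x) atTop (𝓝 0))
    {η : ℝ} (hη : 0 < η) :
    ∀ᶠ x in atTop, ∑' t, μ.real {ω | x < Z t ω} ≤ (1 + η) * G x := by
  have h1 : Tendsto (fun m => C * ∑' t, M (t + m)) atTop (𝓝 (C * 0)) :=
    (tendsto_sum_nat_add M).const_mul C
  rw [mul_zero] at h1
  obtain ⟨m, hm⟩ := (h1.eventually (gt_mem_nhds (half_pos hη))).exists
  have h2 : Tendsto (fun x => ∑ t ∈ Finset.range m, ∑ s ∈ Finset.range t,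
      μ.real {ω | x < Z s ω ∧ x < Z t ω} / G x) atTop (𝓝 0) := by
    rw [show (0 : ℝ) = ∑ t ∈ Finset.range m, ∑ s ∈ Finset.range t, (0 : ℝ) by simp]
    refine tendsto_finsetSum _ fun t _ => tendsto_finsetSum _ fun s hs => hpair s t ?_
    exact (Finset.mem_range.1 hs).ne
  filter_upwards [h2.eventually (gt_mem_nhds (half_pos hη)), eventually_ge_atTop x₀] with x hx hxx
  have hGx := hRV.1 x (by linarith)
  obtain ⟨h3, h4⟩ := summable_tail hRV hx₀ hC hM hMs htail hxx
  have hsplit : ∑ t ∈ Finset.range m, μ.real {ω | x < Z t ω} + ∑' t, μ.real {ω | x < Z (t + m) ω}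
      = ∑' t, μ.real {ω | x < Z t ω} := h4.sum_add_tsum_nat_add m
  have h5 : ∑' t, μ.real {ω | x < Z (t + m) ω} ≤ G x * (C * ∑' t, M (t + m)) := by
    rw [← tsum_mul_left, ← tsum_mul_left]
    refine Summable.tsum_le_tsum (fun t => (h3 (t + m)).trans (le_of_eq (by ring)))
      (h4.comp_injective (add_left_injective m)) ?_
    exact ((hMs.comp_injective (add_left_injective m)).mul_left C).mul_left _
  have h6 := sum_measureReal_le (μ := μ) (E := fun t => {ω | x < Z t ω})
    (fun t => measurableSet_lt measurable_const (hZ t)) m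
  have h7 : μ.real (⋃ t ∈ Finset.range m, {ω | x < Z t ω}) ≤ G x := by
    rw [hG]
    refine measureReal_mono fun ω hω => ?_
    simp only [Set.mem_iUnion] at hω
    obtain ⟨t, -, ht⟩ := hω
    have ht : x < Z t ω := ht
    calc ENNReal.ofReal x < ENNReal.ofReal (Z t ω) :=
          (ENNReal.ofReal_lt_ofReal_iff (by linarith)).2 ht
      _ ≤ _ := ENNReal.le_tsum t
  simp only [← Finset.sum_div] at hx
  rw [div_lt_iff₀ hGx] at hx
  have h8 : G x * (C * ∑' t, M (t + m)) ≤ G x * (η / 2) := by gcongr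
  have h9 : ∑ t ∈ Finset.range m, ∑ s ∈ Finset.range t,
      μ.real ({ω | x < Z s ω} ∩ {ω | x < Z t ω})
      = ∑ t ∈ Finset.range m, ∑ s ∈ Finset.range t, μ.real {ω | x < Z s ω ∧ x < Z t ω} := rfl
  rw [h9] at h6
  linarith

theorem tail_sum_lower (hZ : ∀ t, Measurable (Z t)) (hZ0 : ∀ t, ∀ᵐ ω ∂μ, 0 ≤ Z t ω)
    (hG : ∀ x, G x = μ.real {ω | ENNReal.ofReal x < ∑' t, ENNReal.ofReal (Z t ω)})
    (hRV : RegVarying G (-α)) (hx₀ : 0 < x₀) (hC : 0 < C) (hM : ∀ t, 0 ≤ M t)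
    (hMs : Summable M) (hr : 1 ≤ r) (hκ : κ < r)
    (hMr : ∑' t, ENNReal.ofReal (M t) ^ (1 / r) ≠ ⊤)
    (htail : ∀ t, ∀ x ≥ x₀, ∀ u, 0 < u → u ≤ 1 →
      μ {ω | u * x < Z t ω} ≤ ENNReal.ofReal (C * G x * M t * u ^ (-κ)))
    (hpair : ∀ s t, s ≠ t →
      Tendsto (fun x => μ.real {ω | x < Z s ω ∧ x < Z t ω} / G x) atTop (𝓝 0))
    {w : ℝ} (hw : 0 < w) (hw2 : w < 1 / 2) :
    ∀ᶠ x in atTop, (1 - w) * G x ≤ ∑' t, μ.real {ω | (1 - 2 * w) * x < Z t ω} := by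
  have hr0 : 0 < r := by linarith
  set τ : ℕ → ℝ≥0∞ := fun m => ∑' t, ENNReal.ofReal (M (t + m))
    + ENNReal.ofReal (r / (r - κ)) * (∑' t, ENNReal.ofReal (M (t + m)) ^ (1 / r)) ^ r with hτ
  have hτlim : Tendsto τ atTop (𝓝 0) := by
    have h1 := ENNReal.tendsto_sum_nat_add (fun t => ENNReal.ofReal (M t)) hMs.tsum_ofReal_ne_top
    have h2 := ENNReal.tendsto_sum_nat_add (fun t => ENNReal.ofReal (M t) ^ (1 / r)) hMr
    have h3 := (ENNReal.continuous_rpow_const (y := r)).continuousAt.tendsto.comp h2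
    rw [ENNReal.zero_rpow_of_pos hr0] at h3
    have h4 := h1.add (ENNReal.Tendsto.const_mul (a := ENNReal.ofReal (r / (r - κ))) h3
      (Or.inr ENNReal.ofReal_ne_top))
    simpa [hτ] using h4
  set A : ℝ := C * (w ^ (-α) + 1) with hA
  have hA0 : 0 < A := by positivity
  obtain ⟨m, hm⟩ := (hτlim.eventually (gt_mem_nhds
    (show (0 : ℝ≥0∞) < ENNReal.ofReal (w / 2 / A) by simp; positivity))).exists
  set k : ℝ := w / (m + 1) with hk
  have hk0 : 0 < k := by positivity
  have hq : Tendsto (fun x => ∑ t ∈ Finset.range m, ∑ s ∈ Finset.range t,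
      μ.real {ω | k * x < Z s ω ∧ k * x < Z t ω} / G x) atTop (𝓝 0) := by
    rw [show (0 : ℝ) = ∑ t ∈ Finset.range m, ∑ s ∈ Finset.range t, (0 : ℝ) by simp]
    refine tendsto_finsetSum _ fun t _ => tendsto_finsetSum _ fun s hs => ?_
    have h1 := (hpair s t (Finset.mem_range.1 hs).ne).comp
      (tendsto_id.const_mul_atTop hk0 : Tendsto (fun x : ℝ => k * x) atTop atTop)
    have h2 := h1.mul (hRV.2 k hk0)
    rw [zero_mul] at h2
    refine h2.congr' ?_
    filter_upwards [eventually_gt_atTop 0] with x hx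
    have := hRV.1 (k * x) (by positivity)
    simp only [Function.comp_apply]
    field_simp
  have hw12 : 0 < 1 - 2 * w := by linarith
  filter_upwards [hq.eventually (gt_mem_nhds (half_pos hw)), eventually_ge_atTop x₀,
    eventually_ge_atTop (x₀ / w), eventually_ge_atTop (x₀ / (1 - 2 * w)),
    (hRV.2 w hw).eventually (gt_mem_nhds (lt_add_one _))] with x hx hx1 hx2 hx3 hx4
  have hx0 : 0 < x := by linarith
  have hGx := hRV.1 x hx0
  rw [div_le_iff₀' hw] at hx2
  rw [div_le_iff₀' hw12] at hx3
  rw [div_lt_iff₀ hGx] at hx4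
  have hGw := hRV.1 (w * x) (by positivity)
  have hT : μ.real {ω | ENNReal.ofReal (w * x) < ∑' t, ENNReal.ofReal (Z (t + m) ω)}
      ≤ w / 2 * G x := by
    have h1 := measure_lt_tsum_le (μ := μ) (Z := fun t => Z (t + m)) (fun t => hZ _)
      (fun t => hZ0 _) (x := w * x) (r := r) (κ := κ) (b := fun t => C * G (w * x) * M (t + m))
      (by positivity) hr hκ (fun t => mul_nonneg (by positivity) (hM _))
      (fun t u hu hu1 => htail (t + m) (w * x) hx2 u hu hu1)
    have h2 : ∑' t, ENNReal.ofReal (C * G (w * x) * M (t + m))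
        + ENNReal.ofReal (r / (r - κ)) *
          (∑' t, ENNReal.ofReal (C * G (w * x) * M (t + m)) ^ (1 / r)) ^ r
        = ENNReal.ofReal (C * G (w * x)) * τ m := by
      have hCG : 0 ≤ C * G (w * x) := by positivity
      simp_rw [ENNReal.ofReal_mul hCG, ENNReal.mul_rpow_of_nonneg _ _ (one_div_pos.2 hr0).le,
        ENNReal.tsum_mul_left]
      rw [ENNReal.mul_rpow_of_nonneg _ _ hr0.le, ← ENNReal.rpow_mul, one_div_mul_cancel hr0.ne',
        ENNReal.rpow_one]
      simp only [hτ]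
      ring
    rw [h2] at h1
    refine ENNReal.toReal_le_of_le_ofReal (by positivity) (h1.trans ?_)
    calc ENNReal.ofReal (C * G (w * x)) * τ m
        ≤ ENNReal.ofReal (A * G x) * ENNReal.ofReal (w / 2 / A) := by
          refine mul_le_mul' (ENNReal.ofReal_le_ofReal ?_) hm.le
          calc C * G (w * x) ≤ C * ((w ^ (-α) + 1) * G x) := by gcongr
            _ = A * G x := by rw [hA]; ring
      _ = ENNReal.ofReal (w / 2 * G x) := by
          rw [← ENNReal.ofReal_mul (by positivity)]
          congr 1
          field_simp
  obtain ⟨-, hsummable⟩ := summable_tail hRV hx₀ hC hM hMs htail hx3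
  have hfin : ∑ t ∈ Finset.range m, μ.real {ω | (1 - 2 * w) * x < Z t ω}
      ≤ ∑' t, μ.real {ω | (1 - 2 * w) * x < Z t ω} :=
    hsummable.sum_le_tsum _ fun t _ => measureReal_nonneg
  have hcover : G x ≤ μ.real {ω | ENNReal.ofReal (w * x) < ∑' t, ENNReal.ofReal (Z (t + m) ω)}
      + (∑ t ∈ Finset.range m, μ.real {ω | (1 - 2 * w) * x < Z t ω}
        + ∑ t ∈ Finset.range m, ∑ s ∈ Finset.range t,
          μ.real {ω | k * x < Z s ω ∧ k * x < Z t ω}) := by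
    have hae : ∀ᵐ ω ∂μ, ENNReal.ofReal x < ∑' t, ENNReal.ofReal (Z t ω) →
        ω ∈ {ω | ENNReal.ofReal (w * x) < ∑' t, ENNReal.ofReal (Z (t + m) ω)} ∪
          ((⋃ t ∈ Finset.range m, {ω | (1 - 2 * w) * x < Z t ω}) ∪
          (⋃ t ∈ Finset.range m, ⋃ s ∈ Finset.range t,
            {ω | k * x < Z s ω ∧ k * x < Z t ω})) := by
      filter_upwards [ae_all_iff.2 hZ0] with ω hω hS
      by_cases h1 : ENNReal.ofReal (w * x) < ∑' t, ENNReal.ofReal (Z (t + m) ω)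
      · exact Or.inl h1
      right
      have h2 : (1 - w) * x < ∑ t ∈ Finset.range m, Z t ω := by
        by_contra! hc
        refine absurd hS (not_lt.2 ?_)
        have h3 : ∑ t ∈ Finset.range m, ENNReal.ofReal (Z t ω)
            + ∑' t, ENNReal.ofReal (Z (t + m) ω) = ∑' t, ENNReal.ofReal (Z t ω) :=
          ENNReal.summable.sum_add_tsum_nat_add' (f := fun t => ENNReal.ofReal (Z t ω))
        rw [← h3, ← ENNReal.ofReal_sum_of_nonneg fun t _ => hω t]
        calc _ ≤ ENNReal.ofReal ((1 - w) * x) + ENNReal.ofReal (w * x) := by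
              gcongr
              exact not_lt.1 h1
          _ = ENNReal.ofReal x := by
              rw [← ENNReal.ofReal_add (by nlinarith) (by positivity)]
              congr 1
              ring
      rcases exists_lt_or_exists_pair hx0 hw hw2 h2 with ⟨t, ht, h3⟩ | ⟨t, ht, s, hs, h3⟩
      · exact Or.inl (Set.mem_iUnion₂.2 ⟨t, ht, h3⟩)
      · exact Or.inr (Set.mem_iUnion₂.2 ⟨t, ht, Set.mem_iUnion₂.2 ⟨s, hs, h3⟩⟩)
    rw [hG]
    refine (ENNReal.toReal_mono (measure_ne_top _ _) (measure_mono_ae hae)).trans ?_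
    refine (measureReal_union_le _ _).trans (add_le_add le_rfl ?_)
    refine (measureReal_union_le _ _).trans (add_le_add (measureReal_biUnion_finset_le _ _) ?_)
    refine (measureReal_biUnion_finset_le _ _).trans (Finset.sum_le_sum fun t _ => ?_)
    exact measureReal_biUnion_finset_le _ _
  simp only [← Finset.sum_div] at hx
  rw [div_lt_iff₀ hGx] at hx
  linarith

/-- Principle of a single large jump: the tail of the series is equivalent to the sum of the
tails of its terms. -/
theorem tendsto_sum_tail_div (hZ : ∀ t, Measurable (Z t)) (hZ0 : ∀ t, ∀ᵐ ω ∂μ, 0 ≤ Z t ω)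
    (hG : ∀ x, G x = μ.real {ω | ENNReal.ofReal x < ∑' t, ENNReal.ofReal (Z t ω)})
    (hRV : RegVarying G (-α)) (hx₀ : 0 < x₀) (hC : 0 < C) (hM : ∀ t, 0 ≤ M t)
    (hMs : Summable M) (hr : 1 ≤ r) (hκ : κ < r)
    (hMr : ∑' t, ENNReal.ofReal (M t) ^ (1 / r) ≠ ⊤)
    (htail : ∀ t, ∀ x ≥ x₀, ∀ u, 0 < u → u ≤ 1 →
      μ {ω | u * x < Z t ω} ≤ ENNReal.ofReal (C * G x * M t * u ^ (-κ)))
    (hpair : ∀ s t, s ≠ t →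
      Tendsto (fun x => μ.real {ω | x < Z s ω ∧ x < Z t ω} / G x) atTop (𝓝 0)) :
    Tendsto (fun x => (∑' t, μ.real {ω | x < Z t ω}) / G x) atTop (𝓝 1) := by
  refine tendsto_order.2 ⟨fun c hc => ?_, fun c hc => ?_⟩
  · have h1 : ContinuousAt (fun w : ℝ => (1 - w) * (1 - 2 * w) ^ α) 0 := by
      apply ContinuousAt.mul (by fun_prop)
      apply ContinuousAt.rpow (by fun_prop) (by fun_prop)
      left; simp
    have h2 : ∀ᶠ w in 𝓝[>] (0 : ℝ), c < (1 - w) * (1 - 2 * w) ^ α :=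
      nhdsWithin_le_nhds (h1.tendsto.eventually (lt_mem_nhds (by simpa using hc)))
    have h3 : ∀ᶠ w in 𝓝[>] (0 : ℝ), w < 1 / 2 :=
      nhdsWithin_le_nhds (gt_mem_nhds (by norm_num))
    obtain ⟨w, ⟨hcw, hw2⟩, hw⟩ := ((h2.and h3).and self_mem_nhdsWithin).exists
    have hw : 0 < w := hw
    have hl : 0 < 1 - 2 * w := by linarith
    have h4 := (tendsto_id.const_mul_atTop (inv_pos.2 hl) :
      Tendsto (fun x : ℝ => (1 - 2 * w)⁻¹ * x) atTop atTop).eventually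
      (tail_sum_lower hZ hZ0 hG hRV hx₀ hC hM hMs hr hκ hMr htail hpair hw hw2)
    have h5 := (hRV.2 _ (inv_pos.2 hl)).const_mul (1 - w)
    rw [Real.inv_rpow hl.le, Real.rpow_neg hl.le, inv_inv] at h5
    filter_upwards [h4, h5.eventually (lt_mem_nhds hcw), eventually_gt_atTop 0] with x hx hx5 hx0
    have hGx := hRV.1 x hx0
    rw [mul_inv_cancel_left₀ hl.ne'] at hx
    refine hx5.trans_le ?_
    rw [← mul_div_assoc]
    gcongr
  · have h1 := tail_sum_upper hZ hG hRV hx₀ hC hM hMs htail hpair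
      (show 0 < (c - 1) / 2 by linarith)
    filter_upwards [h1, eventually_gt_atTop 0] with x hx hx0
    have hGx := hRV.1 x hx0
    rw [div_lt_iff₀ hGx]
    refine hx.trans_lt ?_
    gcongr
    linarith

end LargeJump

theorem momE_le_add {P : Measure Ω} {Θ : Ω → ℝ} (hΘ : ∀ᵐ ω ∂P, 0 < Θ ω) (hm : Measurable Θ)
    {a b c : ℝ} (hca : c ≤ a) (hab : a ≤ b) : momE P Θ a ≤ momE P Θ b + momE P Θ c := by
  unfold momE
  rw [← lintegral_add_left (by fun_prop)]
  refine lintegral_mono_ae ?_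
  filter_upwards [hΘ] with ω hω
  rw [← ENNReal.ofReal_add (by positivity) (by positivity)]
  refine ENNReal.ofReal_le_ofReal ?_
  rcases le_total 1 (Θ ω) with h | h
  · have := Real.rpow_le_rpow_of_exponent_le h hab
    have : 0 ≤ Θ ω ^ c := by positivity
    linarith
  · have := Real.rpow_le_rpow_of_exponent_ge hω h hca
    have : 0 ≤ Θ ω ^ b := by positivity
    linarith

theorem RWConditions.exists_exponents {P : Measure Ω} {Θ : ℕ → Ω → ℝ} {α : ℝ}
    (h : RWConditions P Θ α) (hm : ∀ t, Measurable (Θ t)) (hΘ : ∀ t, ∀ᵐ ω ∂P, 0 < Θ t ω) :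
    ∃ δ r : ℝ, 0 < δ ∧ δ < α ∧ 1 ≤ r ∧ α + δ < r ∧
      ∑' t, (momE P (Θ t) (α + δ) + momE P (Θ t) (α - δ)) ^ (1 / r) ≠ ⊤ := by
  obtain ⟨ε, hε, hεα, h⟩ := h
  have key : ∀ δ ≤ ε, 0 < δ → ∀ t, momE P (Θ t) (α + δ) + momE P (Θ t) (α - δ)
      ≤ 2 * (momE P (Θ t) (α + ε) + momE P (Θ t) (α - ε)) := by
    intro δ hδ hδ0 t
    rw [two_mul]
    exact add_le_add (momE_le_add (hΘ t) (hm t) (by linarith) (by linarith))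
      (momE_le_add (hΘ t) (hm t) (by linarith) (by linarith))
  rcases h with ⟨hα, h⟩ | ⟨hα, h⟩
  · have hδ : 0 < min ε ((1 - α) / 2) := lt_min hε (by linarith)
    refine ⟨min ε ((1 - α) / 2), 1, hδ, (min_le_left _ _).trans_lt hεα, le_rfl, ?_, ?_⟩
    · have := min_le_right ε ((1 - α) / 2)
      linarith
    · refine ne_top_of_le_ne_top (ENNReal.mul_ne_top (ENNReal.ofNat_ne_top (n := 2)) h) ?_
      rw [← ENNReal.tsum_mul_left]
      refine ENNReal.tsum_le_tsum fun t => ?_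
      rw [one_div_one, ENNReal.rpow_one]
      exact key _ (min_le_left _ _) hδ t
  · have hp : 0 ≤ 1 / (α + ε) := by positivity
    refine ⟨ε / 2, α + ε, by linarith, by linarith, by linarith, by linarith, ?_⟩
    refine ne_top_of_le_ne_top
      (ENNReal.mul_ne_top (ENNReal.rpow_ne_top_of_nonneg hp (ENNReal.ofNat_ne_top (n := 2))) h) ?_
    rw [← ENNReal.tsum_mul_left]
    refine ENNReal.tsum_le_tsum fun t => ?_
    rw [← ENNReal.mul_rpow_of_nonneg _ _ hp]
    exact ENNReal.rpow_le_rpow (key _ (by linarith) (by linarith) t) hp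

theorem tsum_ne_top_of_tsum_rpow_ne_top {a : ℕ → ℝ≥0∞} {r : ℝ} (hr : 1 ≤ r)
    (h : ∑' t, a t ^ (1 / r) ≠ ⊤) : ∑' t, a t ≠ ⊤ := by
  have hr0 : 0 < r := by linarith
  refine ne_top_of_le_ne_top
    (ENNReal.mul_ne_top (ENNReal.rpow_ne_top_of_nonneg (sub_nonneg.2 hr) h) h) ?_
  rw [← ENNReal.tsum_mul_left]
  refine ENNReal.tsum_le_tsum fun t => ?_
  calc a t = (a t ^ (1 / r)) ^ (r - 1) * a t ^ (1 / r) := by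
        rw [← ENNReal.rpow_mul, ← ENNReal.rpow_add_of_nonneg _ _
          (mul_nonneg (by positivity) (by linarith)) (by positivity)]
        conv_lhs => rw [← ENNReal.rpow_one (a t)]
        congr 1
        field_simp
        ring
    _ ≤ _ := by
        gcongr ?_ * _
        exact ENNReal.rpow_le_rpow (ENNReal.le_tsum t) (by linarith)

/-- Conditioning on one of two independent random variables. -/
theorem IndepFun.measure_pair_mem {β γ : Type*} [MeasurableSpace β] [MeasurableSpace γ]
    {P : Measure Ω} [IsProbabilityMeasure P] {U : Ω → β} {V : Ω → γ} (h : IndepFun U V P)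
    (hU : Measurable U) (hV : Measurable V) {A : Set (β × γ)} (hA : MeasurableSet A) :
    P {ω | (U ω, V ω) ∈ A} = ∫⁻ ω, P {ω' | (U ω, V ω') ∈ A} ∂P := by
  have h1 := (indepFun_iff_map_prod_eq_prod_map_map hU.aemeasurable hV.aemeasurable).1 h
  have h2 : P {ω | (U ω, V ω) ∈ A} = P.map (fun ω => (U ω, V ω)) A :=
    (Measure.map_apply (hU.prodMk hV) hA).symm
  rw [h2, h1, Measure.prod_apply hA, lintegral_map (measurable_measure_prodMk_left hA) hU]
  refine lintegral_congr fun ω => ?_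
  rw [Measure.map_apply hV (measurable_prodMk_left hA)]
  rfl

theorem measure_lt_mul_eq_lintegral {P : Measure Ω} [IsProbabilityMeasure P] {Θ X : Ω → ℝ}
    (h : IndepFun Θ X P) (hΘ : Measurable Θ) (hX : Measurable X) (hpos : ∀ᵐ ω ∂P, 0 < Θ ω)
    (x : ℝ) : P {ω | x < Θ ω * X ω} = ∫⁻ ω, ENNReal.ofReal (tailP P X (x / Θ ω)) ∂P := by
  have h1 := IndepFun.measure_pair_mem h hΘ hX (A := {q : ℝ × ℝ | x < q.1 * q.2})
    (measurableSet_lt measurable_const (by fun_prop))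
  refine h1.trans (lintegral_congr_ae ?_)
  filter_upwards [hpos] with ω hω
  rw [tailP, ENNReal.ofReal_toReal (measure_ne_top _ _)]
  congr 1
  ext ω'
  simp only [Set.mem_ofPred_eq]
  rw [div_lt_iff₀' hω]

theorem antitone_tailP {P : Measure Ω} [IsFiniteMeasure P] (X : Ω → ℝ) : Antitone (tailP P X) := by
  intro x y hxy
  exact ENNReal.toReal_mono (measure_ne_top _ _) (measure_mono fun ω hω => hxy.trans_lt hω)

theorem IdentDistrib.tailP_eq {P : Measure Ω} {X Y : Ω → ℝ} (h : IdentDistrib X Y P P) :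
    tailP P X = tailP P Y := by
  ext x
  exact congrArg ENNReal.toReal (h.measure_mem_eq measurableSet_Ioi)

theorem measure_lt_mul_le {P : Measure Ω} [IsProbabilityMeasure P] {Θ X : Ω → ℝ}
    (h : IndepFun Θ X P) (hΘ : Measurable Θ) (hX : Measurable X) (hpos : ∀ᵐ ω ∂P, 0 < Θ ω)
    {α δ x B : ℝ} (hδ : 0 < δ) (hB : 0 ≤ B)
    (hbound : ∀ θ > 0, tailP P X (x / θ) ≤ B * (θ ^ (α + δ) + θ ^ (α - δ)))
    (hfin : momE P Θ (α + δ) + momE P Θ (α - δ) ≠ ⊤) {u : ℝ} (hu : 0 < u) (hu1 : u ≤ 1) :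
    P {ω | u * x < Θ ω * X ω} ≤ ENNReal.ofReal
      (B * (momE P Θ (α + δ) + momE P Θ (α - δ)).toReal * u ^ (-(α + δ))) := by
  rw [measure_lt_mul_eq_lintegral h hΘ hX hpos]
  have hBu : 0 ≤ B * u ^ (-(α + δ)) := by positivity
  calc _ ≤ ∫⁻ ω, ENNReal.ofReal (B * u ^ (-(α + δ))) *
        (ENNReal.ofReal (Θ ω ^ (α + δ)) + ENNReal.ofReal (Θ ω ^ (α - δ))) ∂P := by
        refine lintegral_mono_ae ?_
        filter_upwards [hpos] with ω hω
        rw [← ENNReal.ofReal_add (by positivity) (by positivity), ← ENNReal.ofReal_mul hBu]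
        refine ENNReal.ofReal_le_ofReal ?_
        have h1 := hbound (Θ ω / u) (by positivity)
        rw [show x / (Θ ω / u) = u * x / Θ ω by field_simp] at h1
        refine h1.trans ?_
        rw [mul_assoc]
        refine mul_le_mul_of_nonneg_left ?_ hB
        rw [Real.div_rpow hω.le hu.le, Real.div_rpow hω.le hu.le, div_eq_mul_inv, div_eq_mul_inv,
          ← Real.rpow_neg hu.le, ← Real.rpow_neg hu.le, mul_add, mul_comm (Θ ω ^ (α + δ)),
          mul_comm (Θ ω ^ (α - δ))]
        have h2 : u ^ (-(α - δ)) ≤ u ^ (-(α + δ)) :=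
          Real.rpow_le_rpow_of_exponent_ge hu hu1 (by linarith)
        gcongr
    _ = ENNReal.ofReal (B * u ^ (-(α + δ))) * (momE P Θ (α + δ) + momE P Θ (α - δ)) := by
        rw [lintegral_const_mul _ (by fun_prop), lintegral_add_left (by fun_prop)]
        rfl
    _ = _ := by
        rw [mul_right_comm, ENNReal.ofReal_mul hBu, ENNReal.ofReal_toReal hfin]

theorem tendsto_joint_tail_div {P : Measure Ω} [IsProbabilityMeasure P] {Θ₁ Θ₂ X₁ X₂ : Ω → ℝ}
    (h : IndepFun (fun ω => (Θ₁ ω, Θ₂ ω)) (fun ω => (X₁ ω, X₂ ω)) P)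
    (hΘ₁ : Measurable Θ₁) (hΘ₂ : Measurable Θ₂) (hX₁ : Measurable X₁) (hX₂ : Measurable X₂)
    (hpos₁ : ∀ᵐ ω ∂P, 0 < Θ₁ ω) (hpos₂ : ∀ᵐ ω ∂P, 0 < Θ₂ ω)
    {G : ℝ → ℝ} {α δ C x₀ : ℝ} (hx₀ : 0 < x₀) (hC : 0 < C) (hG : ∀ x > 0, 0 < G x)
    (hbound : ∀ x ≥ x₀, ∀ θ > 0, tailP P X₁ (x / θ) ≤ C * G x * (θ ^ (α + δ) + θ ^ (α - δ)))
    (hasymp : AsympIndep P X₁ X₂)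
    (hfin₁ : momE P Θ₁ (α + δ) + momE P Θ₁ (α - δ) ≠ ⊤)
    (hfin₂ : momE P Θ₂ (α + δ) + momE P Θ₂ (α - δ) ≠ ⊤) :
    Tendsto (fun x => P.real {ω | x < Θ₁ ω * X₁ ω ∧ x < Θ₂ ω * X₂ ω} / G x) atTop (𝓝 0) := by
  set g : ℝ → ℝ := fun y => P.real {ω | y < X₁ ω ∧ y < X₂ ω} with hg
  have hgF : ∀ y, g y ≤ tailP P X₁ y := fun y =>
    measureReal_mono fun ω hω => hω.1
  have hg0 : ∀ y, 0 ≤ g y := fun y => measureReal_nonneg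
  have hganti : Antitone g := fun x y hxy =>
    measureReal_mono fun ω hω => ⟨hxy.trans_lt hω.1, hxy.trans_lt hω.2⟩
  have hF0 : ∀ y, 0 ≤ tailP P X₁ y := fun y => ENNReal.toReal_nonneg
  have hgF' : ∀ y, g y = g y / tailP P X₁ y * tailP P X₁ y := by
    intro y
    rcases eq_or_ne (tailP P X₁ y) 0 with h0 | h0
    · rw [h0, mul_zero]
      exact le_antisymm (h0 ▸ hgF y) (hg0 y)
    · field_simp
  have hcond : ∀ x > 0, P {ω | x < Θ₁ ω * X₁ ω ∧ x < Θ₂ ω * X₂ ω}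
      ≤ ∫⁻ ω, ENNReal.ofReal (g (x / max (Θ₁ ω) (Θ₂ ω))) ∂P := by
    intro x hx
    have h1 := IndepFun.measure_pair_mem h (hΘ₁.prodMk hΘ₂) (hX₁.prodMk hX₂)
      (A := {q : (ℝ × ℝ) × (ℝ × ℝ) | x < q.1.1 * q.2.1 ∧ x < q.1.2 * q.2.2})
      (MeasurableSet.inter (s₁ := {q : (ℝ × ℝ) × (ℝ × ℝ) | x < q.1.1 * q.2.1})
        (s₂ := {q : (ℝ × ℝ) × (ℝ × ℝ) | x < q.1.2 * q.2.2})
        (measurableSet_lt measurable_const (by fun_prop))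
        (measurableSet_lt measurable_const (by fun_prop)))
    refine h1.trans_le (lintegral_mono_ae ?_)
    filter_upwards [hpos₁, hpos₂] with ω hω₁ hω₂
    rw [hg, ofReal_measureReal]
    refine measure_mono fun ω' hω' => ?_
    have hω' : x < Θ₁ ω * X₁ ω' ∧ x < Θ₂ ω * X₂ ω' := hω'
    have hmax : 0 < max (Θ₁ ω) (Θ₂ ω) := lt_max_of_lt_left hω₁
    have e1 : 0 < X₁ ω' := (mul_pos_iff_of_pos_left hω₁).1 (hx.trans hω'.1)
    have e2 : 0 < X₂ ω' := (mul_pos_iff_of_pos_left hω₂).1 (hx.trans hω'.2)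
    refine ⟨(div_lt_iff₀' hmax).2 (hω'.1.trans_le ?_), (div_lt_iff₀' hmax).2 (hω'.2.trans_le ?_)⟩
    · gcongr
      exact le_max_left _ _
    · gcongr
      exact le_max_right _ _
  have hmaxle : ∀ a : ℝ, ∀ θ₁ > (0 : ℝ), ∀ θ₂ > (0 : ℝ), (max θ₁ θ₂) ^ a ≤ θ₁ ^ a + θ₂ ^ a := by
    intro a θ₁ h1 θ₂ h2
    have : 0 ≤ θ₁ ^ a := by positivity
    have : 0 ≤ θ₂ ^ a := by positivity
    rcases max_choice θ₁ θ₂ with h | h <;> rw [h] <;> linarith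
  have hlim : Tendsto (fun x => ∫⁻ ω, ENNReal.ofReal (g (x / max (Θ₁ ω) (Θ₂ ω)) / G x) ∂P) atTop
      (𝓝 (∫⁻ _, 0 ∂P)) := by
    refine tendsto_lintegral_filter_of_dominated_convergence
      (fun ω => ENNReal.ofReal C *
        ((ENNReal.ofReal (Θ₁ ω ^ (α + δ)) + ENNReal.ofReal (Θ₁ ω ^ (α - δ)))
        + (ENNReal.ofReal (Θ₂ ω ^ (α + δ)) + ENNReal.ofReal (Θ₂ ω ^ (α - δ))))) ?_ ?_ ?_ ?_
    · refine Eventually.of_forall fun x => ?_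
      have := hganti.measurable
      fun_prop
    · filter_upwards [eventually_ge_atTop x₀] with x hx
      filter_upwards [hpos₁, hpos₂] with ω hω₁ hω₂
      have hGx := hG x (by linarith)
      rw [← ENNReal.ofReal_add (by positivity) (by positivity),
        ← ENNReal.ofReal_add (by positivity) (by positivity),
        ← ENNReal.ofReal_add (by positivity) (by positivity), ← ENNReal.ofReal_mul hC.le]
      refine ENNReal.ofReal_le_ofReal ?_
      rw [div_le_iff₀ hGx]
      refine ((hgF _).trans (hbound x hx _ (lt_max_of_lt_left hω₁))).trans ?_
      have h1 := hmaxle (α + δ) _ hω₁ _ hω₂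
      have h2 := hmaxle (α - δ) _ hω₁ _ hω₂
      rw [mul_right_comm]
      refine mul_le_mul_of_nonneg_right (mul_le_mul_of_nonneg_left ?_ hC.le) hGx.le
      linarith
    · rw [lintegral_const_mul _ (by fun_prop), lintegral_add_left (by fun_prop),
        lintegral_add_left (by fun_prop), lintegral_add_left (by fun_prop)]
      exact ENNReal.mul_ne_top ENNReal.ofReal_ne_top (ENNReal.add_ne_top.2 ⟨hfin₁, hfin₂⟩)
    · filter_upwards [hpos₁, hpos₂] with ω hω₁ hω₂
      set θ := max (Θ₁ ω) (Θ₂ ω) with hθ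
      have hθ0 : 0 < θ := lt_max_of_lt_left hω₁
      have h1 : Tendsto
          (fun x => g (x / θ) / tailP P X₁ (x / θ) * (C * (θ ^ (α + δ) + θ ^ (α - δ)))) atTop (𝓝 0) := by
        have := (hasymp.1.comp (tendsto_id.atTop_div_const hθ0)).mul_const
          (C * (θ ^ (α + δ) + θ ^ (α - δ)))
        rwa [zero_mul] at this
      rw [← ENNReal.ofReal_zero]
      refine ENNReal.tendsto_ofReal (squeeze_zero' ?_ ?_ h1)
      · filter_upwards [eventually_gt_atTop 0] with x hx
        exact div_nonneg (hg0 _) (hG x hx).le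
      · filter_upwards [eventually_ge_atTop x₀] with x hx
        have hGx := hG x (by linarith)
        rw [div_le_iff₀ hGx]
        conv_lhs => rw [hgF']
        rw [mul_assoc]
        refine mul_le_mul_of_nonneg_left ?_ (div_nonneg (hg0 _) (hF0 _))
        exact (hbound x hx θ hθ0).trans (le_of_eq (by ring))
  rw [lintegral_zero] at hlim
  have hlim' := (ENNReal.tendsto_toReal ENNReal.zero_ne_top).comp hlim
  rw [ENNReal.toReal_zero] at hlim'
  have hfinlim : ∀ᶠ x in atTop,
      ∫⁻ ω, ENNReal.ofReal (g (x / max (Θ₁ ω) (Θ₂ ω)) / G x) ∂P < 1 :=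
    hlim.eventually (gt_mem_nhds zero_lt_one)
  refine squeeze_zero' ?_ ?_ hlim'
  · filter_upwards [eventually_gt_atTop 0] with x hx
    exact div_nonneg measureReal_nonneg (hG x hx).le
  · filter_upwards [eventually_gt_atTop 0, hfinlim] with x hx hfx
    have hGx := hG x hx
    refine (ENNReal.ofReal_le_iff_le_toReal (hfx.trans ENNReal.one_lt_top).ne).1 ?_
    rw [ENNReal.ofReal_div_of_pos hGx, ofReal_measureReal]
    calc _ ≤ (∫⁻ ω, ENNReal.ofReal (g (x / max (Θ₁ ω) (Θ₂ ω))) ∂P) / ENNReal.ofReal (G x) := by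
          gcongr
          exact hcond x hx
      _ = _ := by
          simp_rw [ENNReal.ofReal_div_of_pos hGx, div_eq_mul_inv]
          rw [lintegral_mul_const]
          have := hganti.measurable
          fun_prop

theorem tendsto_div_of_conv {ρ : Measure ℝ} [IsFiniteMeasure ρ] {F G : ℝ → ℝ}
    {α δ C x₀ η p : ℝ} (hα : 0 < α) (hδ : 0 < δ)
    (hexp : Integrable (fun v => Real.exp (δ * v)) ρ)
    (hexp' : Integrable (fun v => Real.exp (-δ * v)) ρ)
    (hne : ∀ t, charFun ρ t ≠ 0) (hF : Antitone F) (hF0 : ∀ x, 0 ≤ F x)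
    (hG : RegVarying G (-α)) (hx₀ : 0 < x₀)
    (hbound : ∀ x ≥ x₀, ∀ θ > 0, F (x / θ) ≤ C * G x * (θ ^ (α + δ) + θ ^ (α - δ)))
    (hη : 0 < η) (hp : 0 < p) (hFG : ∀ z > 0, p * F z ≤ G (η * z))
    (hconv : ∀ s, Tendsto
      (fun x => ∫ v, Real.exp (α * (s - v)) * (F (x * Real.exp (s - v)) / G x) ∂ρ) atTop (𝓝 1)) :
    Tendsto (fun x => F x / G x) atTop (𝓝 (1 / ρ.real Set.univ)) := by
  refine tendsto_of_subseq_tendsto fun ns hns => ?_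
  obtain ⟨N, hN⟩ := eventually_atTop.1 (hns.eventually (eventually_ge_atTop x₀))
  set y : ℕ → ℝ := fun n => ns (n + N) with hy
  have hyx : ∀ n, x₀ ≤ y n := fun n => hN _ (Nat.le_add_left _ _)
  have hy0 : ∀ n, 0 < y n := fun n => hx₀.trans_le (hyx n)
  have hylim : Tendsto y atTop atTop := hns.comp (tendsto_add_atTop_nat N)
  have hGy : ∀ n, 0 < G (y n) := fun n => hG.1 _ (hy0 n)
  obtain ⟨φ, -, hφ⟩ := exists_subseq_tendsto_of_conv hα hδ hexp hexp' hne
    (f := fun n s => F (y n * Real.exp s) / G (y n)) (C := C) (C' := η ^ (-α) / p + 1)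
    (fun n s t hst => by
      have := hGy n
      have := hy0 n
      have h : F (y n * Real.exp t) ≤ F (y n * Real.exp s) := hF (by gcongr)
      dsimp only
      gcongr)
    (fun n s => div_nonneg (hF0 _) (hGy n).le)
    (fun n s => by
      have h := hbound (y n) (hyx n) (Real.exp (-s)) (Real.exp_pos _)
      rw [Real.exp_neg, div_inv_eq_mul, ← Real.exp_neg, ← Real.exp_mul, ← Real.exp_mul] at h
      have h1 : F (y n * Real.exp s) / G (y n)
          ≤ C * (Real.exp (-s * (α + δ)) + Real.exp (-s * (α - δ))) := by
        rw [div_le_iff₀ (hGy n)]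
        exact h.trans (le_of_eq (by ring))
      refine (mul_le_mul_of_nonneg_left h1 (Real.exp_pos _).le).trans (le_of_eq ?_)
      rw [mul_left_comm, mul_add, ← Real.exp_add, ← Real.exp_add, add_comm (Real.exp _)]
      congr 3 <;> ring)
    (fun s => by
      have h1 := ((hG.2 (η * Real.exp s) (by positivity)).comp hylim).const_mul
        (Real.exp (α * s) / p)
      have h2 : Real.exp (α * s) / p * (η * Real.exp s) ^ (-α) = η ^ (-α) / p := by
        rw [Real.mul_rpow hη.le (Real.exp_pos _).le, ← Real.exp_mul]
        have h3 : Real.exp (α * s) * Real.exp (s * -α) = 1 := by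
          rw [← Real.exp_add, show α * s + s * -α = 0 by ring, Real.exp_zero]
        linear_combination (η ^ (-α) / p) * h3
      rw [h2] at h1
      filter_upwards [h1.eventually (gt_mem_nhds (lt_add_one _))] with n hn
      refine le_trans ?_ hn.le
      have h3 := hFG (y n * Real.exp s) (mul_pos (hy0 n) (Real.exp_pos _))
      have hGn := hGy n
      simp only [Function.comp_apply]
      rw [← le_div_iff₀' hp] at h3
      calc _ ≤ Real.exp (α * s) * (G (η * (y n * Real.exp s)) / p / G (y n)) := by gcongr
        _ = _ := by
          rw [show η * Real.exp s * y n = η * (y n * Real.exp s) by ring]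
          ring)
    (fun s => (hconv s).comp hylim)
  refine ⟨fun n => φ n + N, ?_⟩
  simpa [hy] using hφ

theorem RegVarying.of_tendsto_div {F G : ℝ → ℝ} {ρ m : ℝ} (hG : RegVarying G ρ) (hF : Antitone F)
    (hm : 0 < m) (h : Tendsto (fun x => F x / G x) atTop (𝓝 (1 / m))) :
    RegVarying F ρ ∧ Tendsto (fun x => G x / (F x * m)) atTop (𝓝 1) := by
  have hm' : 0 < 1 / m := by positivity
  have hpos : ∀ x, 0 < F x := by
    intro x
    obtain ⟨y, ⟨hy, hy0⟩, hxy⟩ := (((h.eventually (lt_mem_nhds hm')).and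
      (eventually_gt_atTop 0)).and (eventually_ge_atTop x)).exists
    exact ((div_pos_iff_of_pos_right (hG.1 y hy0)).1 hy).trans_le (hF hxy)
  refine ⟨⟨fun x _ => hpos x, fun t ht => ?_⟩, ?_⟩
  · have h1 := h.comp (tendsto_id.const_mul_atTop ht : Tendsto (fun x : ℝ => t * x) atTop atTop)
    have h2 := (h1.mul (hG.2 t ht)).div h hm'.ne'
    rw [mul_div_cancel_left₀ _ hm'.ne'] at h2
    refine h2.congr' ?_
    filter_upwards [eventually_gt_atTop 0] with x hx
    have := hG.1 x hx
    have := hG.1 (t * x) (by positivity)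
    have := hpos x
    simp only [Function.comp_apply, Pi.div_apply]
    field_simp
  · have h1 := (h.mul_const m).inv₀ (by positivity)
    rw [one_div_mul_cancel hm.ne', inv_one] at h1
    refine h1.congr fun x => ?_
    rw [div_mul_eq_mul_div, inv_div]

/-- The law of `log Θ_t` under the measure with density `Θ_t ^ α`, summed over `t`. -/
def logMeasure (P : Measure Ω) (Θ : ℕ → Ω → ℝ) (α : ℝ) : Measure ℝ :=
  Measure.sum fun t => (P.withDensity fun ω => ENNReal.ofReal (Θ t ω ^ α)).map
    fun ω => Real.log (Θ t ω)

section LogMeasure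

variable {P : Measure Ω} {Θ : ℕ → Ω → ℝ} {α : ℝ}

theorem lintegral_logMeasure (hm : ∀ t, Measurable (Θ t)) {g : ℝ → ℝ≥0∞} (hg : Measurable g) :
    ∫⁻ v, g v ∂logMeasure P Θ α
      = ∑' t, ∫⁻ ω, ENNReal.ofReal (Θ t ω ^ α) * g (Real.log (Θ t ω)) ∂P := by
  rw [logMeasure, lintegral_sum_measure]
  congr 1
  ext t
  have := hm t
  rw [lintegral_map hg (by fun_prop),
    lintegral_withDensity_eq_lintegral_mul _ (by fun_prop) (by fun_prop)]
  rfl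

theorem lintegral_exp_logMeasure (hm : ∀ t, Measurable (Θ t)) (hΘ : ∀ t, ∀ᵐ ω ∂P, 0 < Θ t ω)
    (b : ℝ) : ∫⁻ v, ENNReal.ofReal (Real.exp (b * v)) ∂logMeasure P Θ α
      = ∑' t, momE P (Θ t) (α + b) := by
  rw [lintegral_logMeasure hm (by fun_prop)]
  congr 1
  ext t
  refine lintegral_congr_ae ?_
  filter_upwards [hΘ t] with ω hω
  rw [← ENNReal.ofReal_mul (by positivity), Real.rpow_add hω, mul_comm b,
    ← Real.rpow_def_of_pos hω]

theorem integrable_exp_logMeasure (hm : ∀ t, Measurable (Θ t)) (hΘ : ∀ t, ∀ᵐ ω ∂P, 0 < Θ t ω)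
    {b : ℝ} (hb : ∑' t, momE P (Θ t) (α + b) ≠ ⊤) :
    Integrable (fun v => Real.exp (b * v)) (logMeasure P Θ α) := by
  refine ⟨by fun_prop, ?_⟩
  rw [hasFiniteIntegral_iff_ofReal (ae_of_all _ fun v => (Real.exp_pos _).le),
    lintegral_exp_logMeasure hm hΘ]
  exact hb.lt_top

theorem logMeasure_univ (hm : ∀ t, Measurable (Θ t)) (hΘ : ∀ t, ∀ᵐ ω ∂P, 0 < Θ t ω) :
    logMeasure P Θ α Set.univ = ∑' t, momE P (Θ t) α := by
  simpa using lintegral_exp_logMeasure (α := α) hm hΘ 0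

theorem charFun_logMeasure (hm : ∀ t, Measurable (Θ t)) (hΘ : ∀ t, ∀ᵐ ω ∂P, 0 < Θ t ω)
    [IsFiniteMeasure (logMeasure P Θ α)] (β : ℝ) :
    charFun (logMeasure P Θ α) β = ∑' t, ∫ ω, Complex.exp
      (((α : ℂ) + (β : ℂ) * Complex.I) * (Real.log (Θ t ω) : ℂ)) ∂P := by
  rw [charFun_apply_real]
  have hint : Integrable (fun v : ℝ => Complex.exp (β * v * Complex.I)) (logMeasure P Θ α) := by
    refine Integrable.of_bound (by fun_prop) 1 (ae_of_all _ fun v => ?_)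
    rw [← Complex.ofReal_mul, Complex.norm_exp_ofReal_mul_I]
  rw [logMeasure, ← (hasSum_integral_measure hint).tsum_eq]
  congr 1
  ext t
  have := hm t
  rw [integral_map (by fun_prop) (by fun_prop), integral_withDensity_eq_integral_toReal_smul
    (by fun_prop) (ae_of_all _ fun ω => ENNReal.ofReal_lt_top)]
  refine integral_congr_ae ?_
  filter_upwards [hΘ t] with ω hω
  rw [ENNReal.toReal_ofReal (by positivity), Real.rpow_def_of_pos hω, Complex.real_smul,
    Complex.ofReal_exp, ← Complex.exp_add]
  congr 1
  push_cast
  ring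

theorem integral_logMeasure_eq (hm : ∀ t, Measurable (Θ t)) (hΘ : ∀ t, ∀ᵐ ω ∂P, 0 < Θ t ω)
    {F : ℝ → ℝ} (hF : Antitone F) (hF0 : ∀ x, 0 ≤ F x) {x c : ℝ} (hc : 0 < c)
    {h : ℕ → ℝ} (s : ℝ) (hh : ∀ t, 0 ≤ h t)
    (hh' : ∀ t, ENNReal.ofReal (h t) = ∫⁻ ω, ENNReal.ofReal (F (x * Real.exp s / Θ t ω)) ∂P) :
    ∫ v, Real.exp (α * (s - v)) * (F (x * Real.exp (s - v)) / c) ∂logMeasure P Θ α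
      = Real.exp (α * s) / c * ∑' t, h t := by
  have hFm := hF.measurable
  have hq : 0 ≤ Real.exp (α * s) / c := by positivity
  rw [integral_eq_lintegral_of_nonneg_ae
    (ae_of_all _ fun v => mul_nonneg (Real.exp_pos _).le (div_nonneg (hF0 _) hc.le))
    (by fun_prop), lintegral_logMeasure hm (by fun_prop)]
  have h1 : ∀ t, ∫⁻ ω, ENNReal.ofReal (Θ t ω ^ α) * ENNReal.ofReal
      (Real.exp (α * (s - Real.log (Θ t ω))) * (F (x * Real.exp (s - Real.log (Θ t ω))) / c)) ∂P
      = ENNReal.ofReal (Real.exp (α * s) / c * h t) := by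
    intro t
    have := hm t
    rw [ENNReal.ofReal_mul hq, hh', ← lintegral_const_mul _ (by fun_prop)]
    refine lintegral_congr_ae ?_
    filter_upwards [hΘ t] with ω hω
    rw [← ENNReal.ofReal_mul (by positivity), ← ENNReal.ofReal_mul hq, Real.exp_sub,
      Real.exp_log hω, mul_sub, Real.exp_sub, mul_comm α (Real.log _), ← Real.rpow_def_of_pos hω]
    congr 1
    have : 0 < Θ t ω ^ α := by positivity
    field_simp
  simp_rw [h1]
  rw [ENNReal.tsum_toReal_eq fun t => ENNReal.ofReal_ne_top, ← tsum_mul_left]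
  exact tsum_congr fun t => ENNReal.toReal_ofReal (mul_nonneg hq (hh t))

end LogMeasure

theorem exists_pos_measure_lt {P : Measure Ω} [IsProbabilityMeasure P] {Θ : Ω → ℝ}
    (hΘ : ∀ᵐ ω ∂P, 0 < Θ ω) : ∃ η > 0, 0 < P.real {ω | η < Θ ω} := by
  by_contra! hcon
  have h1 : ∀ᵐ ω ∂P, ∀ n : ℕ, ¬ 1 / ((n : ℝ) + 1) < Θ ω := by
    refine ae_all_iff.2 fun n => ?_
    have h2 := le_antisymm (hcon (1 / ((n : ℝ) + 1)) (by positivity)) measureReal_nonneg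
    rw [measureReal_eq_zero_iff] at h2
    rw [ae_iff]
    simpa only [not_not] using h2
  obtain ⟨ω, hω, hω1⟩ := (hΘ.and h1).exists
  obtain ⟨n, hn⟩ := exists_nat_one_div_lt hω
  exact hω1 n hn

theorem mul_tailP_le {P : Measure Ω} [IsProbabilityMeasure P] {X Θ : ℕ → Ω → ℝ} (t : ℕ)
    (h : IndepFun (Θ t) (X t) P) {η z : ℝ} (hη : 0 < η) (hz : 0 < z) :
    P.real {ω | η < Θ t ω} * tailP P (X t) z
      ≤ P.real {ω | ENNReal.ofReal (η * z) < ∑' t, ENNReal.ofReal (Θ t ω * X t ω)} := by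
  have h1 := h.measure_inter_preimage_eq_mul (Set.Ioi η) (Set.Ioi z) measurableSet_Ioi
    measurableSet_Ioi
  have h2 : P.real {ω | η < Θ t ω} * tailP P (X t) z
      = P.real (Θ t ⁻¹' Set.Ioi η ∩ X t ⁻¹' Set.Ioi z) := by
    rw [measureReal_def, measureReal_def, h1, ENNReal.toReal_mul]
    rfl
  rw [h2]
  refine measureReal_mono fun ω hω => ?_
  have hΘ : η < Θ t ω := hω.1
  have hX : z < X t ω := hω.2
  calc ENNReal.ofReal (η * z) < ENNReal.ofReal (Θ t ω * X t ω) := by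
        refine (ENNReal.ofReal_lt_ofReal_iff (mul_pos (hη.trans hΘ) (hz.trans hX))).2 ?_
        gcongr
    _ ≤ _ := ENNReal.le_tsum (f := fun t => ENNReal.ofReal (Θ t ω * X t ω)) t

/-- Theorem 4.5 (main converse result): under the setup of Proposition 4.4, if moreover the
Mellin transform `Σ_t E[Θ_t^{α+iβ}]` never vanishes (`β ∈ ℝ`), then `X₁` has a regularly
varying tail of index `-α` and `P[X_(∞) > x] ~ P[X₁ > x]·Σ_t E[Θ_t^α]` as `x → ∞`. -/
theorem stmt3 {Ω : Type*} [MeasurableSpace Ω] (P : Measure Ω) [IsProbabilityMeasure P]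
    (X Θ : ℕ → Ω → ℝ) (α : ℝ) (hα : 0 < α)
    (hXmeas : ∀ t, Measurable (X t)) (hΘmeas : ∀ t, Measurable (Θ t))
    (hXpos : ∀ t, ∀ᵐ ω ∂P, 0 < X t ω) (hΘpos : ∀ t, ∀ᵐ ω ∂P, 0 < Θ t ω)
    (hident : ∀ t, IdentDistrib (X t) (X 0) P P)
    (hpair : ∀ s t : ℕ, s ≠ t → AsympIndep P (X s) (X t))
    (hindep : IndepFun (fun ω => fun t => Θ t ω) (fun ω => fun t => X t ω) P)
    (hfin : ∀ᵐ ω ∂P, (∑' t : ℕ, ENNReal.ofReal (Θ t ω * X t ω)) ≠ ⊤)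
    (hRV : RegVarying
      (fun x : ℝ =>
        (P {ω | ENNReal.ofReal x < ∑' t : ℕ, ENNReal.ofReal (Θ t ω * X t ω)}).toReal)
      (-α))
    (hRW : RWConditions P Θ α)
    (hmellin : ∀ β : ℝ,
      (∑' t : ℕ, ∫ ω, Complex.exp
          (((α : ℂ) + (β : ℂ) * Complex.I) * (Real.log (Θ t ω) : ℂ)) ∂P) ≠ 0) :
    RegVarying (tailP P (X 0)) (-α) ∧
      Tendsto (fun x : ℝ =>
          (P {ω | ENNReal.ofReal x < ∑' t : ℕ, ENNReal.ofReal (Θ t ω * X t ω)}).toReal /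
            (tailP P (X 0) x * (∑' t : ℕ, momE P (Θ t) α).toReal))
        atTop (nhds 1) := by
  obtain ⟨δ, r, hδ, hδα, hr, hκ, hN⟩ := hRW.exists_exponents hΘmeas hΘpos
  have hNsum := tsum_ne_top_of_tsum_rpow_ne_top hr hN
  set N : ℕ → ℝ≥0∞ := fun t => momE P (Θ t) (α + δ) + momE P (Θ t) (α - δ) with hNdef
  have hNfin : ∀ t, N t ≠ ⊤ := ENNReal.ne_top_of_tsum_ne_top hNsum
  have hplus : ∑' t, momE P (Θ t) (α + δ) ≠ ⊤ :=
    ne_top_of_le_ne_top hNsum (ENNReal.tsum_le_tsum fun t => le_self_add)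
  have hminus : ∑' t, momE P (Θ t) (α + -δ) ≠ ⊤ :=
    ne_top_of_le_ne_top hNsum (ENNReal.tsum_le_tsum fun t => le_add_self)
  have hzero : ∑' t, momE P (Θ t) α ≠ ⊤ :=
    ne_top_of_le_ne_top hNsum (ENNReal.tsum_le_tsum fun t =>
      momE_le_add (hΘpos t) (hΘmeas t) (by linarith) (by linarith))
  set G : ℝ → ℝ := fun x =>
    (P {ω | ENNReal.ofReal x < ∑' t : ℕ, ENNReal.ofReal (Θ t ω * X t ω)}).toReal with hG
  have hGanti : Antitone G := fun x y hxy =>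
    measureReal_mono fun ω hω => (ENNReal.ofReal_le_ofReal hxy).trans_lt hω
  have hindep1 : ∀ t, IndepFun (Θ t) (X t) P := fun t =>
    hindep.comp (measurable_pi_apply t) (measurable_pi_apply t)
  have hindep2 : ∀ s t, IndepFun (fun ω => (Θ s ω, Θ t ω)) (fun ω => (X s ω, X t ω)) P :=
    fun s t => hindep.comp (φ := fun f : ℕ → ℝ => (f s, f t)) (ψ := fun f : ℕ → ℝ => (f s, f t))
      (by fun_prop) (by fun_prop)
  set F : ℝ → ℝ := tailP P (X 0) with hF
  have hFX : ∀ t, tailP P (X t) = F := fun t => IdentDistrib.tailP_eq (hident t)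
  have hFanti : Antitone F := antitone_tailP _
  have hF0 : ∀ x, 0 ≤ F x := fun x => ENNReal.toReal_nonneg
  obtain ⟨η, hη, hp⟩ := exists_pos_measure_lt (hΘpos 0)
  have hFG : ∀ z > 0, P.real {ω | η < Θ 0 ω} * F z ≤ G (η * z) := fun z hz =>
    mul_tailP_le 0 (hindep1 0) hη hz
  obtain ⟨C, hC, x₀, hx₀, hbound⟩ :=
    hRV.potter_of_le hGanti (fun x => measureReal_le_one) hδ hδα hη hp hFG
  have hsum : Tendsto (fun x => (∑' t, P.real {ω | x < Θ t ω * X t ω}) / G x) atTop (𝓝 1) := by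
    refine tendsto_sum_tail_div (Z := fun t ω => Θ t ω * X t ω) (C := C) (x₀ := x₀) (r := r)
      (κ := α + δ) (M := fun t => (N t).toReal) (fun t => (hΘmeas t).mul (hXmeas t)) (fun t => ?_)
      (fun x => rfl) hRV hx₀ hC (fun t => ENNReal.toReal_nonneg) (ENNReal.summable_toReal hNsum)
      hr hκ ?_ ?_ ?_
    · filter_upwards [hΘpos t, hXpos t] with ω h1 h2
      positivity
    · simpa only [ENNReal.ofReal_toReal (hNfin _)] using hN
    · intro t x hx u hu hu1
      have hGx := hRV.1 x (by linarith)
      refine measure_lt_mul_le (hindep1 t) (hΘmeas t) (hXmeas t) (hΘpos t) hδ (by positivity)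
        (fun θ hθ => ?_) (hNfin t) hu hu1
      rw [hFX]
      exact hbound x hx θ hθ
    · intro s t hst
      refine tendsto_joint_tail_div (hindep2 s t) (hΘmeas s) (hΘmeas t) (hXmeas s) (hXmeas t)
        (hΘpos s) (hΘpos t) hx₀ hC hRV.1 (fun x hx θ hθ => ?_) (hpair s t hst) (hNfin s) (hNfin t)
      rw [hFX]
      exact hbound x hx θ hθ
  have huniv := logMeasure_univ (α := α) hΘmeas hΘpos
  have : IsFiniteMeasure (logMeasure P Θ α) := ⟨huniv ▸ hzero.lt_top⟩
  have hchar : ∀ β, charFun (logMeasure P Θ α) β ≠ 0 := fun β => by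
    rw [charFun_logMeasure hΘmeas hΘpos]
    exact hmellin β
  have hmass : (logMeasure P Θ α).real Set.univ = (∑' t, momE P (Θ t) α).toReal := by
    rw [measureReal_def, huniv]
  have hmass0 : 0 < (∑' t, momE P (Θ t) α).toReal := by
    refine lt_of_le_of_ne ENNReal.toReal_nonneg fun h0 => hchar 0 ?_
    rw [charFun_zero, hmass, ← h0, Complex.ofReal_zero]
  have hlim : Tendsto (fun x => F x / G x) atTop
      (𝓝 (1 / (∑' t, momE P (Θ t) α).toReal)) := by
    rw [← hmass]
    refine tendsto_div_of_conv hα hδ (integrable_exp_logMeasure hΘmeas hΘpos hplus)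
      (integrable_exp_logMeasure hΘmeas hΘpos hminus) hchar hFanti hF0 hRV hx₀ hbound hη hp hFG
      fun s => ?_
    have hs := Real.exp_pos s
    have h1 := (hsum.comp (tendsto_id.const_mul_atTop hs :
      Tendsto (fun x : ℝ => Real.exp s * x) atTop atTop)).mul (hRV.2 _ hs)
    have h2 := h1.const_mul (Real.exp (α * s))
    have h3 : Real.exp (α * s) * (1 * Real.exp s ^ (-α)) = 1 := by
      rw [one_mul, ← Real.exp_mul, ← Real.exp_add, show α * s + s * -α = 0 by ring, Real.exp_zero]
    rw [h3] at h2
    refine h2.congr' ?_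
    filter_upwards [eventually_gt_atTop 0] with x hx
    have hGx := hRV.1 x hx
    have hGsx := hRV.1 (Real.exp s * x) (by positivity)
    rw [integral_logMeasure_eq hΘmeas hΘpos hFanti hF0 hGx
      (h := fun t => P.real {ω | Real.exp s * x < Θ t ω * X t ω}) s
      (fun t => measureReal_nonneg) fun t => ?_]
    · simp only [Function.comp_apply]
      change 0 < G (Real.exp s * x) at hGsx
      change 0 < G x at hGx
      field_simp
    · rw [ofReal_measureReal, measure_lt_mul_eq_lintegral (hindep1 t) (hΘmeas t) (hXmeas t)
        (hΘpos t), hFX, mul_comm x]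
  exact hRV.of_tendsto_div hFanti hmass0 hlim
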